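/- Let N ≥ 4 and 3 ≤ m < N be integers, let 0 < a < b with a < |q|·b, and let R₀, M > 0. Let Δ̃₁ and Δ₂ be holomorphic on Ω := {(z,ξ) ∈ ℂ² : |q|·a/2 ≤ |z| ≤ 2b, |ξ| ≥ R₀} with |Δ̃₁(z,ξ)| ≤ M/|ξ|^N and |Δ₂(z,ξ)| ≤ M/|ξ|^N on Ω. For δ > 0 set S_δ := {(z,ξ) : a ≤ |z| ≤ b, |z·exp(2πiτξ)| ≤ δ} and S'_δ := {(z,ξ) : |q|·a ≤ |z| ≤ b, |z·exp(2πiτξ)| ≤ δ}. Then there exists δ₀ > 0 such that for every 0 < δ ≤ δ₀: there is a unique pair (h, g̃) of holomorphic functions on S'_δ with N'(h) + N'(g̃) ≤ 1/2, where N'(u) := sup_{S'_δ}|u| + sup_{(z,ξ)∈S'_δ, Im ξ ≥ 1} |u(z,ξ)|·√(Im ξ), solving for all (z,ξ) ∈ S_δ the system: g̃(q·z, ξ−1) − g̃(z,ξ) = (1 + g̃(z,ξ))·Δ̃₁(z·(1+g̃(z,ξ)), ξ + h(z,ξ)) and h(q·z, ξ−1) − h(z,ξ) = Δ₂(z·(1+g̃(z,ξ)),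 ξ + h(z,ξ)) (all displayed arguments lying in the respective domains). Moreover N'(h) + N'(g̃) → 0 as δ → 0, and for every θ ∈ (0, π/2] there exists D > 0 depending only on θ (for fixed τ, m, a, b, N, M, R₀) such that |h(z,ξ)| ≤ D/|ξ|^{m−2} and |g̃(z,ξ)| ≤ D/|ξ|^{m−2} for all (z,ξ) ∈ S'_δ with θ − ϖ ≤ arg ξ ≤ π − θ − ϖ. -/

import Mathlib

open Complex

/-- The domain `S_δ = {(z,ξ) : a ≤ |z| ≤ b, |z·exp(2πiτξ)| ≤ δ}`. -/
noncomputable def sectDom (τ : ℂ) (a b δ : ℝ) : Set (ℂ × ℂ) :=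
  {p : ℂ × ℂ | a ≤ ‖p.1‖ ∧ ‖p.1‖ ≤ b ∧
    ‖p.1 * Complex.exp (2 * (Real.pi : ℂ) * Complex.I * τ * p.2)‖ ≤ δ}

/-- The enlarged domain `S'_δ = {(z,ξ) : |q|·a ≤ |z| ≤ b, |z·exp(2πiτξ)| ≤ δ}`,
`q = exp(2πiτ)`. -/
noncomputable def sectDom' (τ : ℂ) (a b δ : ℝ) : Set (ℂ × ℂ) :=
  {p : ℂ × ℂ |
    ‖Complex.exp (2 * (Real.pi : ℂ) * Complex.I * τ)‖ * a ≤ ‖p.1‖ ∧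
    ‖p.1‖ ≤ b ∧
    ‖p.1 * Complex.exp (2 * (Real.pi : ℂ) * Complex.I * τ * p.2)‖ ≤ δ}

/-- The domain `Ω = {(z,ξ) : |q|·a/2 ≤ |z| ≤ 2b, |ξ| ≥ R₀}`. -/
noncomputable def omegaDom (τ : ℂ) (a b R₀ : ℝ) : Set (ℂ × ℂ) :=
  {p : ℂ × ℂ |
    ‖Complex.exp (2 * (Real.pi : ℂ) * Complex.I * τ)‖ * a / 2 ≤
      ‖p.1‖ ∧
    ‖p.1‖ ≤ 2 * b ∧ R₀ ≤ ‖p.2‖}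

/-- The norm `N'(u) = sup_{S'}|u| + sup_{S' ∩ {Im ξ ≥ 1}} |u|·√(Im ξ)`. -/
noncomputable def nprime (S' : Set (ℂ × ℂ)) (u : ℂ × ℂ → ℂ) : ℝ :=
  sSup ((fun p : ℂ × ℂ => ‖u p‖) '' S') +
  sSup ((fun p : ℂ × ℂ => ‖u p‖ * Real.sqrt p.2.im) ''
    (S' ∩ {p : ℂ × ℂ | 1 ≤ p.2.im}))

/-- The properties of the pair `(h, g̃)` of statement 15: holomorphic on `S'_δ`, with the
relevant suprema finite and `N'(h) + N'(g̃) ≤ 1/2`, solving the nonlinear conjugacy system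
on `S_δ` (with all displayed arguments in the respective domains). -/
noncomputable def pairSolProp (τ : ℂ) (a b R₀ δ : ℝ) (Δ₁ Δ₂ h g : ℂ × ℂ → ℂ) : Prop :=
  ContinuousOn h (sectDom' τ a b δ) ∧
  DifferentiableOn ℂ h (interior (sectDom' τ a b δ)) ∧
  ContinuousOn g (sectDom' τ a b δ) ∧
  DifferentiableOn ℂ g (interior (sectDom' τ a b δ)) ∧
  BddAbove ((fun p : ℂ × ℂ => ‖h p‖) '' sectDom' τ a b δ) ∧
  BddAbove ((fun p : ℂ × ℂ => ‖h p‖ * Real.sqrt p.2.im) ''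
    (sectDom' τ a b δ ∩ {p : ℂ × ℂ | 1 ≤ p.2.im})) ∧
  BddAbove ((fun p : ℂ × ℂ => ‖g p‖) '' sectDom' τ a b δ) ∧
  BddAbove ((fun p : ℂ × ℂ => ‖g p‖ * Real.sqrt p.2.im) ''
    (sectDom' τ a b δ ∩ {p : ℂ × ℂ | 1 ≤ p.2.im})) ∧
  nprime (sectDom' τ a b δ) h + nprime (sectDom' τ a b δ) g ≤ 1 / 2 ∧
  ∀ p ∈ sectDom τ a b δ,
    (p.1 * (1 + g p), p.2 + h p) ∈ omegaDom τ a b R₀ ∧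
    g (Complex.exp (2 * (Real.pi : ℂ) * Complex.I * τ) * p.1, p.2 - 1) - g p =
      (1 + g p) * Δ₁ (p.1 * (1 + g p), p.2 + h p) ∧
    h (Complex.exp (2 * (Real.pi : ℂ) * Complex.I * τ) * p.1, p.2 - 1) - h p =
      Δ₂ (p.1 * (1 + g p), p.2 + h p)

/-!
The map `(z, ξ) ↦ (qz, ξ - 1)` is the time `-τ` map of the flow `(z, ξ) ↦ (z e^{-2πis}, ξ + s/τ)`,
which preserves `z e^{2πiτξ}` and moves the level `log |z| / 2π` by `Im s`. Hence, along a flow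
line, the linear equation `u(qz, ξ - 1) - u(z, ξ) = E(z, ξ)` is solved by integrating `E` against
the `τ`-periodic kernel `1 / (τ (e^{2πis/τ} - 1))` on a horizontal line: shifting the line across
the pole at `s = 0` picks up exactly the residue `E`. A difference of two solutions that decay as
`Im ξ → ∞` is bounded and `τ`-periodic along each flow line, so it extends to a bounded entire
function of `s` and vanishes. The solution operator gains a power of the depth
`-log |z e^{2πiτξ}| / 2π`, so for small `δ` the nonlinear system is a contraction. In the sectors
of the statement `|ξ|` is comparable to the depth, which turns decay in the depth into decay
in `|ξ|`.
-/

section HolomorphicMaps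

open Metric MeasureTheory

variable {E F : Type*} [NormedAddCommGroup E] [NormedSpace ℂ E]
  [NormedAddCommGroup F] [NormedSpace ℂ F] {f : E → F} {c : E} {r η M : ℝ}

theorem norm_fderiv_le_of_norm_le_on_ball (hr : 0 < r) (hf : DifferentiableOn ℂ f (ball c r))
    (hM : ∀ x ∈ ball c r, ‖f x‖ ≤ M) : ‖fderiv ℂ f c‖ ≤ 2 * M / r := by
  refine Complex.norm_fderiv_le_div_of_mapsTo_ball hf (fun x hx => ?_) hr
  rw [mem_closedBall, dist_eq_norm]
  linarith [norm_sub_le (f x) (f c), hM x hx, hM c (mem_ball_self hr)]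

theorem norm_sub_le_of_norm_le_on_ball (hη : 0 < η) (hf : DifferentiableOn ℂ f (ball c (r + η)))
    (hM : ∀ x ∈ ball c (r + η), ‖f x‖ ≤ M) {x y : E} (hx : x ∈ closedBall c r)
    (hy : y ∈ closedBall c r) : ‖f y - f x‖ ≤ 2 * M / η * ‖y - x‖ := by
  let _ : NormedSpace ℝ E := NormedSpace.restrictScalars ℝ ℂ E
  have hsub : ∀ w ∈ closedBall c r, ball w η ⊆ ball c (r + η) := fun w hw =>
    ball_subset_ball' (by linarith [mem_closedBall.1 hw])
  exact (convex_closedBall c r).norm_image_sub_le_of_norm_fderiv_le (𝕜 := ℂ)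
    (fun w hw => (hf.mono (hsub w hw)).differentiableAt (ball_mem_nhds w hη))
    (fun w hw => norm_fderiv_le_of_norm_le_on_ball hη (hf.mono (hsub w hw))
      fun x hx => hM x (hsub w hw hx)) hx hy

theorem differentiableOn_tsum_of_norm_le [CompleteSpace F] {u : ℕ → E → F} {U : Set E}
    (hU : IsOpen U) {v : ℕ → ℝ} (hv : Summable v) (hu : ∀ n, DifferentiableOn ℂ (u n) U)
    (huv : ∀ n, ∀ x ∈ U, ‖u n x‖ ≤ v n) : DifferentiableOn ℂ (fun x => ∑' n, u n x) U := by
  let _ : NormedSpace ℝ E := NormedSpace.restrictScalars ℝ ℂ E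
  intro x hx
  obtain ⟨r, hr, hrU⟩ := Metric.isOpen_iff.1 hU x hx
  have hr2 : 0 < r / 2 := half_pos hr
  have hsub : ∀ w ∈ ball x (r / 2), ball w (r / 2) ⊆ U := fun w hw =>
    (ball_subset_ball' (by linarith [mem_ball.1 hw])).trans hrU
  refine (hasFDerivAt_tsum_of_isPreconnected (𝕜 := ℂ) ((hv.mul_left 2).div_const (r / 2))
    isOpen_ball (convex_ball x (r / 2)).isPreconnected
    (fun n w hw => (((hu n).mono (hsub w hw)).differentiableAt
      (ball_mem_nhds w hr2)).hasFDerivAt)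
    (fun n w hw => norm_fderiv_le_of_norm_le_on_ball hr2 ((hu n).mono (hsub w hw))
      fun y hy => huv n y (hsub w hw hy))
    (mem_ball_self hr2) (.of_norm_bounded hv fun n => huv n x hx)
    (mem_ball_self hr2)).differentiableAt.differentiableWithinAt

theorem differentiableAt_integral_of_norm_le {α : Type*} [MeasurableSpace α] {μ : Measure α}
    {u : E → α → F} {bound : α → ℝ} (hr : 0 < r) (hbound : Integrable bound μ)
    (hu : ∀ x ∈ ball c r, AEStronglyMeasurable (u x) μ)
    (hu' : AEStronglyMeasurable (fun a => fderiv ℂ (u · a) c) μ)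
    (hd : ∀ a, DifferentiableOn ℂ (u · a) (ball c r))
    (hle : ∀ a, ∀ x ∈ ball c r, ‖u x a‖ ≤ bound a) :
    DifferentiableAt ℂ (fun x => ∫ a, u x a ∂μ) c := by
  have hc := mem_ball_self (x := c) hr
  have hr2 : 0 < r / 2 := half_pos hr
  refine (hasFDerivAt_integral_of_dominated_loc_of_lip' (ball_mem_nhds c hr2)
    (fun x hx => hu x (ball_subset_ball (by linarith) hx))
    (hbound.mono' (hu c hc) (.of_forall fun a => hle a c hc)) hu'
    (.of_forall fun a x hx => ?_) ((hbound.const_mul 2).div_const (r / 2))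
    (.of_forall fun a => ((hd a).differentiableAt
      (ball_mem_nhds c hr)).hasFDerivAt)).2.differentiableAt
  exact norm_sub_le_of_norm_le_on_ball (f := (u · a)) (r := r / 2) hr2 (by simpa using hd a)
    (by simpa using hle a) (mem_closedBall_self hr2.le) (ball_subset_closedBall hx)

end HolomorphicMaps

section StripContour

open Filter Topology MeasureTheory Set
open scoped Interval

/-- The filter of points of the horizontal strip `Im s ∈ S` whose real part tends to `±∞`. -/
def stripEnds (S : Set ℝ) : Filter ℂ := comap (fun s => |s.re|) atTop ⊓ 𝓟 (im ⁻¹' S)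

theorem tendsto_inv_stripEnds (S : Set ℝ) : Tendsto (fun s : ℂ => s⁻¹) (stripEnds S) (𝓝 0) := by
  refine tendsto_inv₀_cobounded.comp (tendsto_norm_atTop_iff_cobounded.1 ?_)
  exact tendsto_atTop_mono abs_re_le_norm (tendsto_comap.mono_left inf_le_left)

variable {F : Type*} [NormedAddCommGroup F] [NormedSpace ℂ F] {H g : ℂ → F} {y y₁ y₂ : ℝ}

theorem tendsto_integral_vertical_of_stripEnds (hH : Tendsto H (stripEnds [[y₁, y₂]]) (𝓝 0))
    {σ : ℝ → ℝ} (hσ : Tendsto (fun X => |σ X|) atTop atTop) :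
    Tendsto (fun X => ∫ y in y₁..y₂, H (σ X + y * I)) atTop (𝓝 0) := by
  rw [Metric.tendsto_nhds]
  intro ε hε
  have hδ : 0 < ε / (|y₂ - y₁| + 1) := by positivity
  obtain ⟨X₀, hX₀⟩ : ∃ X₀ : ℝ, ∀ s : ℂ, X₀ ≤ |s.re| → s.im ∈ [[y₁, y₂]] →
      ‖H s‖ < ε / (|y₂ - y₁| + 1) := by
    have := Metric.tendsto_nhds.1 hH _ hδ
    rw [stripEnds, eventually_inf_principal, eventually_comap] at this
    obtain ⟨X₀, h⟩ := eventually_atTop.1 this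
    exact ⟨X₀, fun s hs hsS => by simpa using h _ hs s rfl hsS⟩
  filter_upwards [hσ.eventually_ge_atTop X₀] with X hX
  rw [dist_zero_right]
  have hle := intervalIntegral.norm_integral_le_of_norm_le_const (a := y₁) (b := y₂)
    (f := fun y : ℝ => H (σ X + y * I)) (C := ε / (|y₂ - y₁| + 1)) fun y hy =>
      (hX₀ _ (by simpa using hX) (by simpa using uIoc_subset_uIcc hy)).le
  refine hle.trans_lt ?_
  rw [div_mul_eq_mul_div, div_lt_iff₀ (by positivity)]
  nlinarith

theorem tendsto_integral_horizontal_sub (hd : ∀ s : ℂ, s.im ∈ [[y₁, y₂]] → DifferentiableAt ℂ H s)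
    (hH : Tendsto H (stripEnds [[y₁, y₂]]) (𝓝 0)) :
    Tendsto (fun X : ℝ => (∫ x in -X..X, H (x + y₁ * I)) - ∫ x in -X..X, H (x + y₂ * I))
      atTop (𝓝 0) := by
  have hleft := tendsto_integral_vertical_of_stripEnds hH (σ := fun X => -X)
    (by simpa using tendsto_abs_atTop_atTop)
  have hright := tendsto_integral_vertical_of_stripEnds hH (σ := id) tendsto_abs_atTop_atTop
  have hsides := (hleft.const_smul I).sub (hright.const_smul I)
  simp only [smul_zero, sub_zero] at hsides
  refine hsides.congr fun X => ?_
  have hrect := integral_boundary_rect_eq_zero_of_differentiableOn H (-X + y₁ * I) (X + y₂ * I)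
    fun s hs => (hd s (by simpa using hs.2)).differentiableWithinAt
  simp only [add_re, neg_re, ofReal_re, mul_re, I_re, mul_zero, ofReal_im, I_im, mul_one,
    sub_self, add_zero, add_im, neg_im, neg_zero, mul_im, zero_add, ofReal_neg] at hrect
  simp only [ofReal_neg, id]
  rw [← sub_eq_zero, ← neg_eq_zero, ← hrect]
  abel

theorem integral_horizontal_eq (hd : ∀ s : ℂ, s.im ∈ [[y₁, y₂]] → DifferentiableAt ℂ H s)
    (hH : Tendsto H (stripEnds [[y₁, y₂]]) (𝓝 0))
    (hi₁ : Integrable fun x : ℝ => H (x + y₁ * I)) (hi₂ : Integrable fun x : ℝ => H (x + y₂ * I)) :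
    ∫ x : ℝ, H (x + y₁ * I) = ∫ x : ℝ, H (x + y₂ * I) := by
  rw [← sub_eq_zero]
  exact tendsto_nhds_unique
    ((intervalIntegral_tendsto_integral hi₁ tendsto_neg_atTop_atBot tendsto_id).sub
      (intervalIntegral_tendsto_integral hi₂ tendsto_neg_atTop_atBot tendsto_id))
    (tendsto_integral_horizontal_sub hd hH)

theorem add_mul_I_ne_zero (x : ℝ) (hy : y ≠ 0) : (x + y * I : ℂ) ≠ 0 := fun h =>
  hy (by simpa using congrArg im h)

theorem integral_inv_one_add_add_sq (c : ℝ) : ∫ x : ℝ, (1 + (c + x) ^ 2)⁻¹ = Real.pi := by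
  rw [integral_add_left_eq_self (fun x : ℝ => (1 + x ^ 2)⁻¹) c, integral_univ_inv_one_add_sq]

theorem integrable_inv_one_add_add_sq (c : ℝ) :
    Integrable fun x : ℝ => (1 + (c + x) ^ 2)⁻¹ :=
  integrable_inv_one_add_sq.comp_add_left c

theorem inv_sub_inv_conj_line (hy : 0 < y) (x : ℝ) :
    (x + (-y : ℝ) * I : ℂ)⁻¹ - (x + y * I)⁻¹ = 2 * I * ((y⁻¹ * (1 + (x / y) ^ 2)⁻¹ : ℝ) : ℂ) := by
  have hy₀ : (y : ℂ) ≠ 0 := ofReal_ne_zero.2 hy.ne'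
  have h₁ := add_mul_I_ne_zero x hy.ne'
  have h₂ := add_mul_I_ne_zero x (neg_ne_zero.2 hy.ne')
  have hprod : ((1 + (x / y) ^ 2 : ℝ) : ℂ) = (x + (-y : ℝ) * I) * (x + y * I) / y ^ 2 := by
    push_cast
    rw [eq_div_iff (pow_ne_zero 2 hy₀), add_mul, div_pow, div_mul_cancel₀ _ (pow_ne_zero 2 hy₀)]
    linear_combination (y : ℂ) ^ 2 * I_sq
  rw [ofReal_mul, ofReal_inv, ofReal_inv, hprod, inv_div, inv_sub_inv h₂ h₁, sq, mul_div_assoc,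
    inv_mul_cancel_left₀ hy₀, mul_div_assoc']
  congr 1
  push_cast
  ring

theorem tendsto_integral_inv_horizontal_sub (hy : 0 < y) :
    Tendsto (fun X : ℝ => (∫ x in -X..X, (x + (-y : ℝ) * I : ℂ)⁻¹) -
      ∫ x in -X..X, (x + y * I : ℂ)⁻¹) atTop (𝓝 (2 * Real.pi * I)) := by
  have hint : Integrable fun x : ℝ => (1 + (x / y) ^ 2)⁻¹ :=
    integrable_inv_one_add_sq.comp_div hy.ne'
  have hval : ∫ x : ℝ, 2 * I * ((y⁻¹ * (1 + (x / y) ^ 2)⁻¹ : ℝ) : ℂ) = 2 * Real.pi * I := by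
    rw [integral_const_mul, integral_complex_ofReal, integral_const_mul,
      Measure.integral_comp_div (fun x : ℝ => (1 + x ^ 2)⁻¹), integral_univ_inv_one_add_sq,
      abs_of_pos hy, smul_eq_mul, inv_mul_cancel_left₀ hy.ne']
    ring
  have hint' : Integrable fun x : ℝ => 2 * I * ((y⁻¹ * (1 + (x / y) ^ 2)⁻¹ : ℝ) : ℂ) :=
    (hint.const_mul y⁻¹).ofReal.const_mul (2 * I)
  rw [← hval]
  refine (intervalIntegral_tendsto_integral hint' tendsto_neg_atTop_atBot
    tendsto_id).congr fun X => ?_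
  have hi : ∀ w : ℝ, w ≠ 0 → IntervalIntegrable (fun x : ℝ => (x + w * I : ℂ)⁻¹) volume (-X) X :=
    fun w hw => (Continuous.inv₀ (by fun_prop) fun x =>
      add_mul_I_ne_zero x hw).intervalIntegrable _ _
  rw [← intervalIntegral.integral_sub (hi (-y) (neg_ne_zero.2 hy.ne')) (hi y hy.ne')]
  exact intervalIntegral.integral_congr fun x _ => (inv_sub_inv_conj_line hy x).symm

theorem dslope_zero_of_ne {s : ℂ} (hs : s ≠ 0) : dslope g 0 s = s⁻¹ • g s - s⁻¹ • g 0 := by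
  rw [dslope_of_ne _ hs, slope_def_module, sub_zero, smul_sub]

theorem tendsto_dslope_zero_stripEnds {S : Set ℝ}
    (hg : Tendsto (fun s => s⁻¹ • g s) (stripEnds S) (𝓝 0)) :
    Tendsto (dslope g 0) (stripEnds S) (𝓝 0) := by
  have hlim := hg.sub ((tendsto_inv_stripEnds S).smul_const (g 0))
  rw [zero_smul, sub_zero] at hlim
  refine hlim.congr' ?_
  filter_upwards [(tendsto_comap.mono_left inf_le_left :
    Tendsto _ (stripEnds S) _).eventually_gt_atTop 0] with s hs
  exact (dslope_zero_of_ne fun h => by simp [h] at hs).symm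

theorem intervalIntegral_dslope_zero_line [CompleteSpace F] {w : ℝ} (hw : w ≠ 0)
    (hi : Integrable fun x : ℝ => (x + w * I : ℂ)⁻¹ • g (x + w * I)) (X : ℝ) :
    ∫ x in -X..X, dslope g 0 (x + w * I) =
      (∫ x in -X..X, (x + w * I : ℂ)⁻¹ • g (x + w * I)) -
        (∫ x in -X..X, (x + w * I : ℂ)⁻¹) • g 0 := by
  have hinv : Continuous fun x : ℝ => (x + w * I : ℂ)⁻¹ • g 0 :=
    (Continuous.inv₀ (by fun_prop) fun x => add_mul_I_ne_zero x hw).smul continuous_const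
  rw [← intervalIntegral.integral_smul_const,
    ← intervalIntegral.integral_sub hi.intervalIntegrable (hinv.intervalIntegrable _ _)]
  exact intervalIntegral.integral_congr fun x _ => dslope_zero_of_ne (add_mul_I_ne_zero x hw)

theorem integral_horizontal_sub_eq_residue [CompleteSpace F] (hy : 0 < y)
    (hd : ∀ s : ℂ, s.im ∈ [[-y, y]] → DifferentiableAt ℂ g s)
    (hg : Tendsto (fun s => s⁻¹ • g s) (stripEnds [[-y, y]]) (𝓝 0))
    (hi₁ : Integrable fun x : ℝ => (x + (-y : ℝ) * I : ℂ)⁻¹ • g (x + (-y : ℝ) * I))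
    (hi₂ : Integrable fun x : ℝ => (x + y * I : ℂ)⁻¹ • g (x + y * I)) :
    (∫ x : ℝ, (x + (-y : ℝ) * I : ℂ)⁻¹ • g (x + (-y : ℝ) * I)) -
      ∫ x : ℝ, (x + y * I : ℂ)⁻¹ • g (x + y * I) = (2 * Real.pi * I : ℂ) • g 0 := by
  have hd0 : DifferentiableOn ℂ g {s | s.im ∈ Ioo (-y) y} := fun s hs =>
    (hd s (Ioo_subset_Icc_self.trans Icc_subset_uIcc hs)).differentiableWithinAt
  have hdslope : ∀ s : ℂ, s.im ∈ [[-y, y]] → DifferentiableAt ℂ (dslope g 0) s := by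
    intro s hs
    rcases eq_or_ne s 0 with rfl | hs0
    · have hnhds : {s : ℂ | s.im ∈ Ioo (-y) y} ∈ 𝓝 0 :=
        (isOpen_Ioo.preimage continuous_im).mem_nhds (by simpa using hy)
      exact ((differentiableOn_dslope hnhds).2 hd0).differentiableAt hnhds
    · exact (differentiableAt_dslope_of_ne hs0).2 (hd s hs)
  have hzero := (tendsto_integral_horizontal_sub hdslope
    (tendsto_dslope_zero_stripEnds hg)).add
    ((tendsto_integral_inv_horizontal_sub hy).smul_const (g 0))
  rw [zero_add] at hzero
  refine tendsto_nhds_unique (((intervalIntegral_tendsto_integral hi₁ tendsto_neg_atTop_atBot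
    tendsto_id).sub (intervalIntegral_tendsto_integral hi₂ tendsto_neg_atTop_atBot
    tendsto_id)).congr fun X => ?_) hzero
  simp only [id]
  rw [intervalIntegral_dslope_zero_line (neg_ne_zero.2 hy.ne') hi₁,
    intervalIntegral_dslope_zero_line hy.ne' hi₂, sub_smul]
  abel

end StripContour

section LogLevel

/-- The level `log r / 2π` of a radius `r`. In these units multiplication of the radius by `|q|`
lowers the level by `Im τ`. -/
noncomputable def logLevel (r : ℝ) : ℝ := Real.log r / (2 * Real.pi)

theorem logLevel_lt_logLevel {r s : ℝ} (hr : 0 < r) (h : r < s) : logLevel r < logLevel s := by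
  unfold logLevel
  gcongr

theorem logLevel_le_logLevel_iff {r s : ℝ} (hr : 0 < r) (hs : 0 < s) :
    logLevel r ≤ logLevel s ↔ r ≤ s := by
  rw [logLevel, logLevel, div_le_div_iff_of_pos_right Real.two_pi_pos, Real.log_le_log_iff hr hs]

theorem logLevel_mul {r s : ℝ} (hr : r ≠ 0) (hs : s ≠ 0) :
    logLevel (r * s) = logLevel r + logLevel s := by
  rw [logLevel, Real.log_mul hr hs, add_div, ← logLevel, ← logLevel]

theorem logLevel_norm_exp_two_pi_I_mul (s : ℂ) :
    logLevel ‖exp (2 * Real.pi * I * s)‖ = -s.im := by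
  have hre : (2 * Real.pi * I * s : ℂ).re = 2 * Real.pi * -s.im := by simp
  rw [logLevel, norm_exp, Real.log_exp, hre, mul_div_cancel_left₀ _ Real.two_pi_pos.ne']

theorem continuousAt_logLevel_norm_fst {p : ℂ × ℂ} (hp : p.1 ≠ 0) :
    ContinuousAt (fun p : ℂ × ℂ => logLevel ‖p.1‖) p :=
  (continuous_fst.norm.continuousAt.log (norm_ne_zero_iff.2 hp)).div_const _

end LogLevel

section Flow

/-- The flow `(z, ξ) ↦ (z e^{-2πis}, ξ + s/τ)` in complex time `s`, which preserves
`z e^{2πiτξ}`; its time `-τ` map is the shift `(z, ξ) ↦ (qz, ξ - 1)` of the difference equations. -/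
noncomputable def qFlow (τ s : ℂ) (p : ℂ × ℂ) : ℂ × ℂ :=
  (p.1 * exp (-(2 * Real.pi * I * s)), p.2 + s / τ)

/-- The depth `-log |z e^{2πiτξ}| / 2π` of `(z, ξ)`, an invariant of the flow, written so that the
contribution of each coordinate is visible. -/
noncomputable def depth (τ : ℂ) (p : ℂ × ℂ) : ℝ := (τ * p.2).im - logLevel ‖p.1‖

/-- The points whose first coordinate has level in `(A, B)` and whose depth exceeds `w`: an open
version of the domains `S_δ` and `S'_δ` in logarithmic units. -/
def deepDomain (τ : ℂ) (A B w : ℝ) : Set (ℂ × ℂ) :=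
  {p | p.1 ≠ 0 ∧ A < logLevel ‖p.1‖ ∧ logLevel ‖p.1‖ < B ∧ w < depth τ p}

variable {τ s : ℂ} {p : ℂ × ℂ} {A B A' B' w : ℝ}

theorem qFlow_zero (τ : ℂ) (p : ℂ × ℂ) : qFlow τ 0 p = p := by simp [qFlow]

theorem qFlow_qFlow (τ s t : ℂ) (p : ℂ × ℂ) : qFlow τ s (qFlow τ t p) = qFlow τ (s + t) p := by
  refine Prod.ext ?_ (by simp only [qFlow]; ring)
  simp only [qFlow]
  rw [mul_assoc, ← exp_add]
  ring_nf

theorem qFlow_neg_self (hτ : τ ≠ 0) (p : ℂ × ℂ) :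
    qFlow τ (-τ) p = (exp (2 * Real.pi * I * τ) * p.1, p.2 - 1) := by
  rw [qFlow, neg_div, div_self hτ, mul_neg, neg_neg, mul_comm p.1, sub_eq_add_neg]

theorem qFlow_fst_ne_zero (τ s : ℂ) (hp : p.1 ≠ 0) : (qFlow τ s p).1 ≠ 0 :=
  mul_ne_zero hp (exp_ne_zero _)

theorem logLevel_qFlow (τ s : ℂ) (hp : p.1 ≠ 0) :
    logLevel ‖(qFlow τ s p).1‖ = logLevel ‖p.1‖ + s.im := by
  rw [qFlow, norm_mul, logLevel_mul (norm_ne_zero_iff.2 hp) (norm_ne_zero_iff.2 (exp_ne_zero _)),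
    ← mul_neg, logLevel_norm_exp_two_pi_I_mul, neg_im, neg_neg]

theorem mul_qFlow_snd (hτ : τ ≠ 0) (s : ℂ) (p : ℂ × ℂ) : τ * (qFlow τ s p).2 = τ * p.2 + s := by
  rw [qFlow, mul_add, mul_div_cancel₀ _ hτ]

theorem depth_qFlow (hτ : τ ≠ 0) (s : ℂ) (hp : p.1 ≠ 0) : depth τ (qFlow τ s p) = depth τ p := by
  rw [depth, logLevel_qFlow τ s hp, mul_qFlow_snd hτ, add_im, depth]
  ring

theorem im_mul_snd_eq (τ : ℂ) (p : ℂ × ℂ) : (τ * p.2).im = depth τ p + logLevel ‖p.1‖ :=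
  (sub_add_cancel _ _).symm

theorem qFlow_mem_deepDomain (hτ : τ ≠ 0) (hp : p ∈ deepDomain τ A B w)
    (hA : A' < logLevel ‖p.1‖ + s.im) (hB : logLevel ‖p.1‖ + s.im < B') :
    qFlow τ s p ∈ deepDomain τ A' B' w := by
  refine ⟨qFlow_fst_ne_zero τ s hp.1, ?_, ?_, ?_⟩
  · rwa [logLevel_qFlow τ s hp.1]
  · rwa [logLevel_qFlow τ s hp.1]
  · rw [depth_qFlow hτ s hp.1]
    exact hp.2.2.2

theorem deepDomain_subset (hA : A' ≤ A) (hB : B ≤ B') : deepDomain τ A B w ⊆ deepDomain τ A' B' w :=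
  fun _ hp => ⟨hp.1, hA.trans_lt hp.2.1, hp.2.2.1.trans_le hB, hp.2.2.2⟩

theorem continuousAt_depth (τ : ℂ) (hp : p.1 ≠ 0) : ContinuousAt (depth τ) p := by
  have him : Continuous fun p : ℂ × ℂ => (τ * p.2).im := by fun_prop
  exact him.continuousAt.sub (continuousAt_logLevel_norm_fst hp)

theorem isOpen_deepDomain (τ : ℂ) (A B w : ℝ) : IsOpen (deepDomain τ A B w) := by
  rw [isOpen_iff_mem_nhds]
  rintro p ⟨hp, hA, hB, hw⟩
  have hlevel := continuousAt_logLevel_norm_fst hp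
  filter_upwards [continuous_fst.continuousAt.eventually_ne hp, hlevel.eventually (lt_mem_nhds hA),
    hlevel.eventually (gt_mem_nhds hB),
    (continuousAt_depth τ hp).eventually (lt_mem_nhds hw)] with x h₀ h₁ h₂ h₃
  exact ⟨h₀, h₁, h₂, h₃⟩

theorem differentiable_qFlow_time (τ : ℂ) (p : ℂ × ℂ) : Differentiable ℂ fun s => qFlow τ s p := by
  unfold qFlow
  fun_prop

theorem differentiable_qFlow (τ s : ℂ) : Differentiable ℂ (qFlow τ s) := by
  unfold qFlow
  fun_prop

end Flow

section Depth

variable {τ : ℂ} {p : ℂ × ℂ} {A B w : ℝ}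

/-- The depth is large compared with the level, so that it is comparable to `Im (τξ)`. -/
def IsDeep (τ : ℂ) (p : ℂ × ℂ) : Prop := 2 * |logLevel ‖p.1‖| + 2 * ‖τ‖ + 2 ≤ depth τ p

/-- A depth beyond which all points of level in `(A - Im τ, B)` satisfy `IsDeep`. -/
noncomputable def depthThreshold (τ : ℂ) (A B : ℝ) : ℝ :=
  2 * (|A| + |B| + τ.im) + 2 * ‖τ‖ + 2

theorem one_le_depthThreshold (hτ : 0 ≤ τ.im) (A B : ℝ) : 1 ≤ depthThreshold τ A B := by
  unfold depthThreshold
  linarith [abs_nonneg A, abs_nonneg B, norm_nonneg τ]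

theorem isDeep_of_mem_deepDomain (hw : depthThreshold τ A B ≤ w) (hτ : 0 < τ.im)
    (hp : p ∈ deepDomain τ (A - τ.im) B w) : IsDeep τ p := by
  obtain ⟨-, hA, hB, hd⟩ := hp
  have hl : |logLevel ‖p.1‖| ≤ |A| + |B| + τ.im :=
    abs_le.2 ⟨by linarith [neg_abs_le A, abs_nonneg B], by linarith [le_abs_self B, abs_nonneg A]⟩
  unfold depthThreshold at hw
  unfold IsDeep
  linarith

theorem im_mul_le_norm_mul_norm (τ ξ : ℂ) : (τ * ξ).im ≤ ‖τ‖ * ‖ξ‖ :=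
  (le_abs_self _).trans ((abs_im_le_norm _).trans_eq (norm_mul _ _))

namespace IsDeep

theorem two_le_depth (hp : IsDeep τ p) : 2 ≤ depth τ p := by
  unfold IsDeep at hp
  linarith [abs_nonneg (logLevel ‖p.1‖), norm_nonneg τ]

theorem half_depth_le_im (hp : IsDeep τ p) : depth τ p / 2 ≤ (τ * p.2).im := by
  unfold IsDeep at hp
  rw [im_mul_snd_eq]
  linarith [neg_abs_le (logLevel ‖p.1‖), norm_nonneg τ]

theorem im_le_two_mul_depth (hp : IsDeep τ p) : (τ * p.2).im ≤ 2 * depth τ p := by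
  unfold IsDeep at hp
  rw [im_mul_snd_eq]
  linarith [le_abs_self (logLevel ‖p.1‖), abs_nonneg (logLevel ‖p.1‖), norm_nonneg τ]

theorem one_add_norm_le_im (hp : IsDeep τ p) : 1 + ‖τ‖ ≤ (τ * p.2).im := by
  unfold IsDeep at hp
  rw [im_mul_snd_eq]
  linarith [neg_abs_le (logLevel ‖p.1‖), abs_nonneg (logLevel ‖p.1‖), norm_nonneg τ]

theorem depth_le_norm (hp : IsDeep τ p) : depth τ p ≤ 2 * ‖τ‖ * ‖p.2‖ := by
  linarith [hp.half_depth_le_im, im_mul_le_norm_mul_norm τ p.2]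

theorem one_le_norm (hp : IsDeep τ p) : 1 ≤ ‖p.2‖ := by
  by_contra! h
  nlinarith [hp.one_add_norm_le_im, im_mul_le_norm_mul_norm τ p.2, norm_nonneg τ]

theorem one_add_re_sq_le (hp : IsDeep τ p) : 1 + (τ * p.2).re ^ 2 ≤ (‖τ‖ * ‖p.2‖) ^ 2 := by
  rw [← norm_mul, ← normSq_eq_norm_sq, normSq_apply]
  nlinarith [hp.one_add_norm_le_im, norm_nonneg τ]

theorem inv_norm_pow_le (hτ : τ ≠ 0) (hp : IsDeep τ p) (k : ℕ) :
    (‖p.2‖ ^ (k + 2))⁻¹ ≤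
      (2 * ‖τ‖) ^ (k + 2) / depth τ p ^ k * (1 + (τ * p.2).re ^ 2)⁻¹ := by
  have hτ₀ : 0 < ‖τ‖ := norm_pos_iff.2 hτ
  have hd : 0 < depth τ p := by linarith [hp.two_le_depth]
  have hξ : 0 < ‖p.2‖ := by linarith [hp.one_le_norm]
  rw [div_mul_eq_mul_div, ← div_eq_mul_inv, div_div, ← one_div,
    div_le_div_iff₀ (by positivity) (by positivity), one_mul]
  calc (1 + (τ * p.2).re ^ 2) * depth τ p ^ k
    _ ≤ (‖τ‖ * ‖p.2‖) ^ 2 * (2 * ‖τ‖ * ‖p.2‖) ^ k := by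
        gcongr
        exacts [hp.one_add_re_sq_le, hp.depth_le_norm]
    _ ≤ (2 * ‖τ‖ * ‖p.2‖) ^ 2 * (2 * ‖τ‖ * ‖p.2‖) ^ k := by
        gcongr
        linarith
    _ = (2 * ‖τ‖) ^ (k + 2) * ‖p.2‖ ^ (k + 2) := by ring

end IsDeep

end Depth

section Kernel

open Set Metric Filter
open scoped Interval

/-- The `τ`-periodic kernel `1 / (τ (e^{2πis/τ} - 1))`, whose pole at `0` has residue `1 / 2πi`. -/
noncomputable def qKernel (τ s : ℂ) : ℂ := (τ * (exp (2 * Real.pi * I * s / τ) - 1))⁻¹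

variable {τ s : ℂ}

theorem ne_zero_of_im_pos (hτ : 0 < τ.im) : τ ≠ 0 := fun h => by simp [h] at hτ

theorem qKernel_sub_self (hτ : τ ≠ 0) (s : ℂ) : qKernel τ (s - τ) = qKernel τ s := by
  have harg : 2 * Real.pi * I * (s - τ) / τ = 2 * Real.pi * I * s / τ - 2 * Real.pi * I := by
    field_simp
  rw [qKernel, harg, exp_periodic.sub_eq, qKernel]

theorem exp_div_sub_one_ne_zero (hτ : 0 < τ.im) (hs : s ≠ 0) (him : |s.im| < τ.im) :
    exp (2 * Real.pi * I * s / τ) - 1 ≠ 0 := by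
  have hτ₀ := ne_zero_of_im_pos hτ
  intro h
  obtain ⟨n, hn⟩ := exp_eq_one_iff.1 (sub_eq_zero.1 h)
  have hsn : s = n * τ := by
    rw [div_eq_iff hτ₀] at hn
    exact mul_left_cancel₀ two_pi_I_ne_zero (by linear_combination hn)
  have hn₀ : n ≠ 0 := fun h₀ => hs (by simp [hsn, h₀])
  have hn₁ : (1 : ℝ) ≤ |(n : ℝ)| := by exact_mod_cast Int.one_le_abs hn₀
  rw [hsn, ← ofReal_intCast, im_ofReal_mul, abs_mul, abs_of_pos hτ] at him
  nlinarith

theorem differentiableAt_qKernel (hτ : 0 < τ.im) (hs : s ≠ 0) (him : |s.im| < τ.im) :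
    DifferentiableAt ℂ (qKernel τ) s :=
  DifferentiableAt.inv (by fun_prop)
    (mul_ne_zero (ne_zero_of_im_pos hτ) (exp_div_sub_one_ne_zero hτ hs him))

theorem max_one_neg_im_le_norm_exp_sub_one {z : ℂ} (hz : 1 ≤ |z.im|) :
    max 1 (-z.im) ≤ 2 * ‖exp (2 * Real.pi * I * z) - 1‖ := by
  have hnorm : ‖exp (2 * Real.pi * I * z)‖ = Real.exp (2 * Real.pi * -z.im) := by
    rw [norm_exp]
    simp
  have hpi := Real.pi_gt_three
  rcases le_abs'.1 hz with h | h
  · have hexp := Real.add_one_le_exp (2 * Real.pi * -z.im)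
    have hsub := norm_sub_norm_le (exp (2 * Real.pi * I * z)) 1
    rw [norm_one, hnorm] at hsub
    rw [max_eq_right (by linarith)]
    nlinarith
  · have hexp : Real.exp (2 * Real.pi * -z.im) ≤ 1 / 2 := by
      have hmono : Real.exp (2 * Real.pi * -z.im) ≤ Real.exp (-1) :=
        Real.exp_le_exp.2 (by nlinarith)
      rw [Real.exp_neg] at hmono
      refine hmono.trans ((inv_le_comm₀ (by positivity) (by positivity)).2 ?_)
      linarith [Real.add_one_le_exp (1 : ℝ)]
    have hsub := norm_sub_norm_le 1 (exp (2 * Real.pi * I * z))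
    rw [norm_one, norm_sub_rev, hnorm] at hsub
    rw [max_eq_left (by linarith)]
    linarith

theorem norm_qKernel_mul_le_of_one_le (h : 1 ≤ |(s / τ).im|) :
    ‖qKernel τ s‖ * max 1 (-(s / τ).im) ≤ 2 / ‖τ‖ := by
  have hexp := max_one_neg_im_le_norm_exp_sub_one h
  rw [mul_div_assoc'] at hexp
  have hpos : 0 < ‖exp (2 * Real.pi * I * s / τ) - 1‖ := by
    linarith [le_max_left 1 (-(s / τ).im)]
  rw [qKernel, norm_inv, norm_mul, mul_inv, mul_assoc, div_eq_inv_mul 2]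
  gcongr
  rwa [inv_mul_le_iff₀ hpos, mul_comm]

theorem im_div_mul_norm_sq (τ s : ℂ) : (s / τ).im * ‖τ‖ ^ 2 = s.im * τ.re - s.re * τ.im := by
  rcases eq_or_ne τ 0 with rfl | h
  · simp
  · have hτ : normSq τ ≠ 0 := normSq_eq_zero.not.2 h
    rw [div_im, ← normSq_eq_norm_sq]
    field_simp

theorem isCompact_strip_im_div (hτ : 0 < τ.im) (y₁ y₂ : ℝ) :
    IsCompact {s : ℂ | s.im ∈ Icc y₁ y₂ ∧ (s / τ).im ∈ Icc (-1) 1} := by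
  refine isCompact_of_isClosed_isBounded ((isClosed_Icc.preimage continuous_im).inter
    (isClosed_Icc.preimage (by fun_prop))) (isBounded_iff_forall_norm_le.2
      ⟨(max |y₁| |y₂| * |τ.re| + ‖τ‖ ^ 2) / τ.im + max |y₁| |y₂|, ?_⟩)
  rintro s ⟨hs, ht⟩
  have him : |s.im| ≤ max |y₁| |y₂| := abs_le_max_abs_abs hs.1 hs.2
  have hre : |s.re| ≤ (max |y₁| |y₂| * |τ.re| + ‖τ‖ ^ 2) / τ.im := by
    rw [le_div_iff₀ hτ]
    calc |s.re| * τ.im = |s.im * τ.re - (s / τ).im * ‖τ‖ ^ 2| := by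
          rw [im_div_mul_norm_sq, sub_sub_cancel, abs_mul, abs_of_pos hτ]
      _ ≤ |s.im| * |τ.re| + |(s / τ).im| * ‖τ‖ ^ 2 := by
          refine (abs_sub _ _).trans_eq ?_
          rw [abs_mul, abs_mul, abs_of_nonneg (sq_nonneg ‖τ‖)]
      _ ≤ max |y₁| |y₂| * |τ.re| + 1 * ‖τ‖ ^ 2 := by
          gcongr
          exact abs_le.2 ht
      _ = _ := by rw [one_mul]
  exact (norm_le_abs_re_add_abs_im s).trans (add_le_add hre him)

theorem exists_norm_qKernel_mul_le (hτ : 0 < τ.im) {ε : ℝ} (hε : 0 < ε) :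
    ∃ C, 0 < C ∧ ∀ s : ℂ, s.im ∈ Icc ε (τ.im - ε) → ‖qKernel τ s‖ * max 1 (-(s / τ).im) ≤ C := by
  have hcont : ContinuousOn (fun s => ‖qKernel τ s‖ * max 1 (-(s / τ).im))
      {s : ℂ | s.im ∈ Icc ε (τ.im - ε) ∧ (s / τ).im ∈ Icc (-1) 1} := by
    refine ContinuousOn.mul (fun s hs => ?_) (by fun_prop)
    have him : |s.im| < τ.im := abs_lt.2 ⟨by linarith [hs.1.1], by linarith [hs.1.2]⟩
    have hs₀ : s ≠ 0 := fun h => by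
      have hpos := hs.1.1
      rw [h, zero_im] at hpos
      linarith
    exact (differentiableAt_qKernel hτ hs₀ him).continuousAt.norm.continuousWithinAt
  obtain ⟨C, hC⟩ := (isCompact_strip_im_div hτ ε (τ.im - ε)).exists_bound_of_continuousOn hcont
  refine ⟨|C| + 2 / ‖τ‖ + 1, by positivity, fun s hs => ?_⟩
  have hτn : 0 ≤ 2 / ‖τ‖ := by positivity
  rcases le_total |(s / τ).im| 1 with h | h
  · linarith [hC s ⟨hs, abs_le.1 h⟩, le_abs_self C,
      Real.le_norm_self (‖qKernel τ s‖ * max 1 (-(s / τ).im))]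
  · linarith [norm_qKernel_mul_le_of_one_le h, abs_nonneg C]

theorem tendsto_im_div_stripEnds (hτ : 0 < τ.im) (y₁ y₂ : ℝ) :
    Tendsto (fun s : ℂ => |(s / τ).im|) (stripEnds [[y₁, y₂]]) atTop := by
  have hτ₀ : 0 < ‖τ‖ := norm_pos_iff.2 (ne_zero_of_im_pos hτ)
  have hre : Tendsto (fun s : ℂ => (|s.re| * τ.im - max |y₁| |y₂| * |τ.re|) / ‖τ‖ ^ 2)
      (stripEnds [[y₁, y₂]]) atTop :=
    (tendsto_atTop_add_const_right _ _ ((tendsto_comap.mono_left inf_le_left).atTop_mul_const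
      hτ)).atTop_div_const (by positivity)
  refine tendsto_atTop_mono' _ ?_ hre
  filter_upwards [mem_inf_of_right (mem_principal_self _)] with s (hs : s.im ∈ [[y₁, y₂]])
  have him : |s.im| ≤ max |y₁| |y₂| := by
    rcases mem_uIcc.1 hs with h | h
    · exact abs_le_max_abs_abs h.1 h.2
    · rw [max_comm]
      exact abs_le_max_abs_abs h.1 h.2
  have hdiv : |(s / τ).im| * ‖τ‖ ^ 2 = |s.im * τ.re - s.re * τ.im| := by
    rw [← im_div_mul_norm_sq, abs_mul, abs_of_nonneg (sq_nonneg ‖τ‖)]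
  rw [div_le_iff₀ (by positivity), hdiv]
  calc |s.re| * τ.im - max |y₁| |y₂| * |τ.re| ≤ |s.re * τ.im| - |s.im * τ.re| := by
        rw [abs_mul, abs_mul, abs_of_pos hτ]
        gcongr
    _ ≤ |s.im * τ.re - s.re * τ.im| := by
        rw [abs_sub_comm]
        exact abs_sub_abs_le_abs_sub _ _

end Kernel

section WeightedDecay

variable {F : Type*} [NormedAddCommGroup F] {τ s : ℂ} {p : ℂ × ℂ} {n : ℕ} {C Λ : ℝ}

/-- The size `max (depth, Im ξ)` by which solutions of the linear difference equation decay
beyond a power of the depth. It is what makes them small in the norm `N'`. -/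
noncomputable def growthWeight (τ : ℂ) (p : ℂ × ℂ) : ℝ := max (depth τ p) p.2.im

/-- The constant converting the decay `Λ / |ξ|^(n+3)` of a source into a bound of
`growthWeight` type. -/
noncomputable def sourceConst (τ : ℂ) (n : ℕ) : ℝ := (2 + 2 * ‖τ‖) * (2 * ‖τ‖) ^ (n + 2)

theorem sourceConst_pos (hτ : τ ≠ 0) (n : ℕ) : 0 < sourceConst τ n := by
  have := norm_pos_iff.2 hτ
  unfold sourceConst
  positivity

theorem growthWeight_le_of_isDeep_qFlow (hτ : τ ≠ 0) (hp : p.1 ≠ 0)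
    (hdeep : IsDeep τ (qFlow τ s p)) :
    growthWeight τ p ≤ (2 + 2 * ‖τ‖) * ‖(qFlow τ s p).2‖ * max 1 (-(s / τ).im) := by
  have hξ := hdeep.one_le_norm
  have hd := hdeep.depth_le_norm
  rw [depth_qFlow hτ s hp] at hd
  have him : p.2.im = (qFlow τ s p).2.im + -(s / τ).im := by
    rw [qFlow, add_im, add_neg_cancel_right]
  have hle := (le_abs_self _).trans (abs_im_le_norm (qFlow τ s p).2)
  have h₁ := le_max_left 1 (-(s / τ).im)
  have h₂ := le_max_right 1 (-(s / τ).im)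
  have hτξ : 0 ≤ 2 * ‖τ‖ * ‖(qFlow τ s p).2‖ := by positivity
  refine max_le ?_ (him.trans_le ?_)
  · nlinarith
  · nlinarith

theorem norm_smul_mul_growthWeight_le [NormedSpace ℂ F] (hτ : τ ≠ 0) (hp : p.1 ≠ 0)
    (hdeep : IsDeep τ (qFlow τ s p)) {k : ℂ} {v : F} (hk : ‖k‖ * max 1 (-(s / τ).im) ≤ C)
    (hv : ‖v‖ ≤ Λ / ‖(qFlow τ s p).2‖ ^ (n + 3)) :
    ‖k • v‖ * growthWeight τ p ≤
      C * Λ * sourceConst τ n / depth τ p ^ n * (1 + ((τ * p.2).re + s.re) ^ 2)⁻¹ := by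
  have hξ : 0 < ‖(qFlow τ s p).2‖ := by linarith [hdeep.one_le_norm]
  have hd := hdeep.two_le_depth
  have hpow := hdeep.inv_norm_pow_le hτ n
  rw [depth_qFlow hτ s hp] at hd hpow
  rw [mul_qFlow_snd hτ, add_re] at hpow
  have hweight : 0 ≤ growthWeight τ p := le_max_of_le_left (by linarith)
  have hC : 0 ≤ C := le_trans (by positivity) hk
  have hΛ : 0 ≤ Λ := by
    have := (norm_nonneg v).trans hv
    rwa [le_div_iff₀ (by positivity), zero_mul] at this
  calc ‖k • v‖ * growthWeight τ p
      ≤ ‖k‖ * (Λ / ‖(qFlow τ s p).2‖ ^ (n + 3)) *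
          ((2 + 2 * ‖τ‖) * ‖(qFlow τ s p).2‖ * max 1 (-(s / τ).im)) := by
        rw [norm_smul]
        gcongr
        exact growthWeight_le_of_isDeep_qFlow hτ hp hdeep
    _ = ‖k‖ * max 1 (-(s / τ).im) * Λ * (2 + 2 * ‖τ‖) * (‖(qFlow τ s p).2‖ ^ (n + 2))⁻¹ := by
        rw [pow_succ _ (n + 2)]
        field_simp
    _ ≤ C * Λ * (2 + 2 * ‖τ‖) * ((2 * ‖τ‖) ^ (n + 2) / depth τ p ^ n *
          (1 + ((τ * p.2).re + s.re) ^ 2)⁻¹) := by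
        gcongr
    _ = _ := by
        rw [sourceConst]
        ring

theorem norm_le_mul_growthWeight (hdeep : 1 ≤ depth τ p) (v : F) :
    ‖v‖ ≤ ‖v‖ * growthWeight τ p :=
  le_mul_of_one_le_right (norm_nonneg _) (hdeep.trans (le_max_left _ _))

end WeightedDecay

section KernelIntegral

open Set Filter Topology MeasureTheory
open scoped Interval

variable {F : Type*} [NormedAddCommGroup F] [NormedSpace ℂ F]

/-- Sources for the linear difference equation: holomorphic on `V`, with decay
`Λ / |ξ|^(n+3)`. -/
structure IsDecayingOn (n : ℕ) (E : ℂ × ℂ → F) (V : Set (ℂ × ℂ)) (Λ : ℝ) : Prop where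
  differentiableOn : DifferentiableOn ℂ E V
  norm_le : ∀ p ∈ V, ‖E p‖ ≤ Λ / ‖p.2‖ ^ (n + 3)

/-- The integrand `K(s) E(ψ_s p)` of the solution operator, `ψ` being the flow. -/
noncomputable def kernelIntegrand (τ : ℂ) (E : ℂ × ℂ → F) (p : ℂ × ℂ) (s : ℂ) : F :=
  qKernel τ s • E (qFlow τ s p)

/-- The integral of `kernelIntegrand` over the line `Im s = y`. -/
noncomputable def kernelIntegral (τ : ℂ) (E : ℂ × ℂ → F) (y : ℝ) (p : ℂ × ℂ) : F :=
  ∫ x : ℝ, kernelIntegrand τ E p (x + y * I)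

variable {τ s : ℂ} {p : ℂ × ℂ} {E : ℂ × ℂ → F} {A B w C Λ y y₁ y₂ : ℝ} {n : ℕ}

theorem add_mul_I_im (x y : ℝ) : (x + y * I : ℂ).im = y := by simp

theorem add_mul_I_re (x y : ℝ) : (x + y * I : ℂ).re = x := by simp

theorem differentiableAt_kernelIntegrand (hτ : 0 < τ.im)
    (hE : DifferentiableOn ℂ E (deepDomain τ A B w)) (hs : s ≠ 0) (him : |s.im| < τ.im)
    (hmem : qFlow τ s p ∈ deepDomain τ A B w) : DifferentiableAt ℂ (kernelIntegrand τ E p) s :=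
  (differentiableAt_qKernel hτ hs him).smul
    ((hE.differentiableAt ((isOpen_deepDomain τ A B w).mem_nhds hmem)).comp s
      (differentiable_qFlow_time τ p s))

theorem norm_kernelIntegrand_mul_growthWeight_le (hτ : 0 < τ.im)
    (hE : IsDecayingOn n E (deepDomain τ A B w) Λ) (hw : depthThreshold τ A B ≤ w)
    (hp : p.1 ≠ 0) (hmem : qFlow τ s p ∈ deepDomain τ A B w)
    (hK : ‖qKernel τ s‖ * max 1 (-(s / τ).im) ≤ C) :
    ‖kernelIntegrand τ E p s‖ * growthWeight τ p ≤
      C * Λ * sourceConst τ n / depth τ p ^ n * (1 + ((τ * p.2).re + s.re) ^ 2)⁻¹ :=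
  norm_smul_mul_growthWeight_le (ne_zero_of_im_pos hτ) hp
    (isDeep_of_mem_deepDomain hw hτ (deepDomain_subset (by linarith) le_rfl hmem)) hK
    (hE.norm_le _ hmem)

theorem norm_kernelIntegrand_le (hτ : 0 < τ.im)
    (hE : IsDecayingOn n E (deepDomain τ A B w) Λ) (hw : depthThreshold τ A B ≤ w)
    (hp : p.1 ≠ 0) (hmem : qFlow τ s p ∈ deepDomain τ A B w)
    (hK : ‖qKernel τ s‖ * max 1 (-(s / τ).im) ≤ C) :
    ‖kernelIntegrand τ E p s‖ ≤
      C * Λ * sourceConst τ n / depth τ p ^ n * (1 + ((τ * p.2).re + s.re) ^ 2)⁻¹ := by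
  have hd := (isDeep_of_mem_deepDomain hw hτ
    (deepDomain_subset (by linarith) le_rfl hmem)).two_le_depth
  rw [depth_qFlow (ne_zero_of_im_pos hτ) s hp] at hd
  exact (norm_le_mul_growthWeight (by linarith) _).trans
    (norm_kernelIntegrand_mul_growthWeight_le hτ hE hw hp hmem hK)

theorem tendsto_kernelIntegrand_stripEnds (hτ : 0 < τ.im)
    (hE : IsDecayingOn n E (deepDomain τ A B w) Λ) (hw : depthThreshold τ A B ≤ w)
    (hp : p.1 ≠ 0) (hmem : ∀ s : ℂ, s.im ∈ [[y₁, y₂]] → qFlow τ s p ∈ deepDomain τ A B w) :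
    Tendsto (kernelIntegrand τ E p) (stripEnds [[y₁, y₂]]) (𝓝 0) := by
  have hbump : Tendsto (fun s : ℂ => (1 + ((τ * p.2).re + s.re) ^ 2)⁻¹)
      (stripEnds [[y₁, y₂]]) (𝓝 0) := by
    refine tendsto_inv_atTop_zero.comp (tendsto_atTop_mono (fun s => ?_)
      (tendsto_atTop_add_const_right _ (-|(τ * p.2).re|)
        (tendsto_comap.mono_left inf_le_left : Tendsto (fun s : ℂ => |s.re|) _ atTop)))
    have habs := abs_sub_abs_le_abs_sub s.re (-(τ * p.2).re)
    rw [abs_neg, sub_neg_eq_add, add_comm s.re] at habs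
    nlinarith [sq_abs ((τ * p.2).re + s.re), sq_nonneg (|(τ * p.2).re + s.re| - 1)]
  have hlim := hbump.const_mul (2 / ‖τ‖ * Λ * sourceConst τ n / depth τ p ^ n)
  rw [mul_zero] at hlim
  refine squeeze_zero_norm' ?_ hlim
  filter_upwards [mem_inf_of_right (mem_principal_self _),
    (tendsto_im_div_stripEnds hτ y₁ y₂).eventually_ge_atTop 1] with s hs hfar
  exact norm_kernelIntegrand_le hτ hE hw hp (hmem s hs) (norm_qKernel_mul_le_of_one_le hfar)

theorem exists_norm_qKernel_line_le (hτ : 0 < τ.im) (hy : y ∈ Ioo 0 τ.im) :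
    ∃ C, 0 < C ∧ ∀ x : ℝ, ‖qKernel τ (x + y * I)‖ * max 1 (-((x + y * I) / τ).im) ≤ C := by
  obtain ⟨C, hC, hK⟩ := exists_norm_qKernel_mul_le hτ (lt_min hy.1 (sub_pos.2 hy.2))
  refine ⟨C, hC, fun x => hK _ ?_⟩
  rw [add_mul_I_im]
  exact ⟨min_le_left _ _, by linarith [min_le_right y (τ.im - y)]⟩

theorem qFlow_line_mem (hτ : τ ≠ 0) (hp : p ∈ deepDomain τ (A - y) (B - y) w) (hs : s.im = y) :
    qFlow τ s p ∈ deepDomain τ A B w :=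
  qFlow_mem_deepDomain hτ hp (by linarith [hp.2.1]) (by linarith [hp.2.2.1])

theorem continuous_kernelIntegrand_line (hτ : 0 < τ.im)
    (hE : DifferentiableOn ℂ E (deepDomain τ A B w)) (hy : y ∈ Ioo 0 τ.im)
    (hp : p ∈ deepDomain τ (A - y) (B - y) w) :
    Continuous fun x : ℝ => kernelIntegrand τ E p (x + y * I) := by
  refine continuous_iff_continuousAt.2 fun x => ?_
  have hd : DifferentiableAt ℂ (kernelIntegrand τ E p) (x + y * I) :=
    differentiableAt_kernelIntegrand hτ hE (add_mul_I_ne_zero x hy.1.ne')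
      (by rw [add_mul_I_im, abs_of_pos hy.1]; exact hy.2)
      (qFlow_line_mem (ne_zero_of_im_pos hτ) hp (add_mul_I_im x y))
  exact hd.continuousAt.comp (f := fun x : ℝ => (x + y * I : ℂ)) (by fun_prop)

theorem integrable_kernelIntegrand_line (hτ : 0 < τ.im)
    (hE : IsDecayingOn n E (deepDomain τ A B w) Λ) (hw : depthThreshold τ A B ≤ w)
    (hy : y ∈ Ioo 0 τ.im) (hp : p ∈ deepDomain τ (A - y) (B - y) w) :
    Integrable fun x : ℝ => kernelIntegrand τ E p (x + y * I) := by
  obtain ⟨C, -, hK⟩ := exists_norm_qKernel_line_le hτ hy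
  have hle : ∀ x : ℝ, ‖kernelIntegrand τ E p (x + y * I)‖ ≤
      C * Λ * sourceConst τ n / depth τ p ^ n * (1 + ((τ * p.2).re + x) ^ 2)⁻¹ := fun x => by
    have hle := norm_kernelIntegrand_le hτ hE hw hp.1
      (qFlow_line_mem (ne_zero_of_im_pos hτ) hp (add_mul_I_im x y)) (hK x)
    rwa [add_mul_I_re] at hle
  exact ((integrable_inv_one_add_add_sq (τ * p.2).re).const_mul _).mono'
    (continuous_kernelIntegrand_line hτ hE.differentiableOn hy hp).aestronglyMeasurable
    (.of_forall hle)

theorem norm_kernelIntegral_mul_growthWeight_le (hτ : 0 < τ.im)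
    (hE : IsDecayingOn n E (deepDomain τ A B w) Λ) (hw : depthThreshold τ A B ≤ w)
    (hp : p ∈ deepDomain τ (A - y) (B - y) w)
    (hK : ∀ x : ℝ, ‖qKernel τ (x + y * I)‖ * max 1 (-((x + y * I) / τ).im) ≤ C) :
    ‖kernelIntegral τ E y p‖ * growthWeight τ p ≤
      Real.pi * C * Λ * sourceConst τ n / depth τ p ^ n := by
  have hd := (isDeep_of_mem_deepDomain hw hτ (deepDomain_subset (by linarith) le_rfl
    (qFlow_line_mem (s := y * I) (ne_zero_of_im_pos hτ) hp (by simp)))).two_le_depth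
  rw [depth_qFlow (ne_zero_of_im_pos hτ) _ hp.1] at hd
  have hweight : 0 < growthWeight τ p := lt_max_of_lt_left (by linarith)
  have hpoint : ∀ x : ℝ, ‖kernelIntegrand τ E p (x + y * I)‖ ≤
      C * Λ * sourceConst τ n / depth τ p ^ n / growthWeight τ p *
        (1 + ((τ * p.2).re + x) ^ 2)⁻¹ := fun x => by
    have hle := norm_kernelIntegrand_mul_growthWeight_le hτ hE hw hp.1
      (qFlow_line_mem (ne_zero_of_im_pos hτ) hp (add_mul_I_im x y)) (hK x)
    rwa [add_mul_I_re, ← le_div_iff₀ hweight, mul_div_right_comm] at hle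
  have hint := norm_integral_le_of_norm_le
    ((integrable_inv_one_add_add_sq (τ * p.2).re).const_mul _) (.of_forall hpoint)
  rw [integral_const_mul, integral_inv_one_add_add_sq, div_mul_eq_mul_div,
    le_div_iff₀ hweight] at hint
  exact hint.trans_eq (by ring)

theorem kernelIntegral_eq_of_mem (hτ : 0 < τ.im)
    (hE : IsDecayingOn n E (deepDomain τ A B w) Λ) (hw : depthThreshold τ A B ≤ w)
    (hy₁ : y₁ ∈ Ioo 0 τ.im) (hy₂ : y₂ ∈ Ioo 0 τ.im) (hp₁ : p ∈ deepDomain τ (A - y₁) (B - y₁) w)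
    (hp₂ : p ∈ deepDomain τ (A - y₂) (B - y₂) w) :
    kernelIntegral τ E y₁ p = kernelIntegral τ E y₂ p := by
  have hmem : ∀ s : ℂ, s.im ∈ [[y₁, y₂]] → qFlow τ s p ∈ deepDomain τ A B w := fun s hs =>
    qFlow_mem_deepDomain (ne_zero_of_im_pos hτ) hp₁
      (by rcases mem_uIcc.1 hs with h | h <;> linarith [hp₁.2.1, hp₂.2.1])
      (by rcases mem_uIcc.1 hs with h | h <;> linarith [hp₁.2.2.1, hp₂.2.2.1])
  refine integral_horizontal_eq (fun s hs => ?_)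
    (tendsto_kernelIntegrand_stripEnds hτ hE hw hp₁.1 hmem)
    (integrable_kernelIntegrand_line hτ hE hw hy₁ hp₁)
    (integrable_kernelIntegrand_line hτ hE hw hy₂ hp₂)
  have him : s.im ∈ Ioo 0 τ.im := ordConnected_Ioo.uIcc_subset hy₁ hy₂ hs
  exact differentiableAt_kernelIntegrand hτ hE.differentiableOn
    (fun h => by simp [h] at him) (by rw [abs_of_pos him.1]; exact him.2)
    (hmem s hs)

end KernelIntegral

section Residue

open Set Filter Topology MeasureTheory
open scoped Interval

/-- The function `s ↦ s K(s)` with the pole of the kernel `K` removed. -/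
noncomputable def regularizedKernel (τ s : ℂ) : ℂ :=
  (τ * dslope (fun s => exp (2 * Real.pi * I * s / τ)) 0 s)⁻¹

variable {F : Type*} [NormedAddCommGroup F] [NormedSpace ℂ F]
  {τ s : ℂ} {p : ℂ × ℂ} {E : ℂ × ℂ → F} {A B w Λ η : ℝ} {n : ℕ}

theorem dslope_exp_of_ne (τ : ℂ) (hs : s ≠ 0) :
    dslope (fun s => exp (2 * Real.pi * I * s / τ)) 0 s =
      (exp (2 * Real.pi * I * s / τ) - 1) / s := by
  rw [dslope_of_ne _ hs, slope_def_field, mul_zero, zero_div, exp_zero, sub_zero]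

theorem dslope_exp_zero (τ : ℂ) :
    dslope (fun s => exp (2 * Real.pi * I * s / τ)) 0 0 = 2 * Real.pi * I / τ := by
  have hlin : HasDerivAt (fun s : ℂ => 2 * Real.pi * I * s / τ) (2 * Real.pi * I / τ) 0 := by
    simpa using ((hasDerivAt_id (0 : ℂ)).const_mul (2 * Real.pi * I)).div_const τ
  rw [dslope_same, hlin.cexp.deriv, mul_zero, zero_div, exp_zero, one_mul]

theorem qKernel_eq_inv_mul (τ : ℂ) (hs : s ≠ 0) :
    qKernel τ s = s⁻¹ * regularizedKernel τ s := by
  rw [qKernel, regularizedKernel, dslope_exp_of_ne τ hs, mul_div_assoc', inv_div,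
    div_eq_mul_inv s, inv_mul_cancel_left₀ hs]

theorem regularizedKernel_zero (hτ : τ ≠ 0) : regularizedKernel τ 0 = (2 * Real.pi * I)⁻¹ := by
  rw [regularizedKernel, dslope_exp_zero, mul_div_cancel₀ _ hτ]

theorem differentiableAt_regularizedKernel (hτ : 0 < τ.im) (him : |s.im| < τ.im) :
    DifferentiableAt ℂ (regularizedKernel τ) s := by
  have hτ₀ := ne_zero_of_im_pos hτ
  have hexp : DifferentiableOn ℂ (fun s => exp (2 * Real.pi * I * s / τ)) univ := by fun_prop
  have hslope : Differentiable ℂ (dslope (fun s => exp (2 * Real.pi * I * s / τ)) 0) :=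
    differentiableOn_univ.1 ((differentiableOn_dslope univ_mem).2 hexp)
  refine ((hslope s).const_mul τ).inv (mul_ne_zero hτ₀ ?_)
  rcases eq_or_ne s 0 with rfl | hs
  · rw [dslope_exp_zero]
    exact div_ne_zero two_pi_I_ne_zero hτ₀
  · rw [dslope_exp_of_ne τ hs]
    exact div_ne_zero (exp_div_sub_one_ne_zero hτ hs him) hs

theorem kernelIntegrand_eq_inv_smul (E : ℂ × ℂ → F) (p : ℂ × ℂ) (hs : s ≠ 0) :
    kernelIntegrand τ E p s = s⁻¹ • regularizedKernel τ s • E (qFlow τ s p) := by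
  rw [kernelIntegrand, qKernel_eq_inv_mul τ hs, mul_smul]

theorem kernelIntegrand_qFlow_neg_self (hτ : τ ≠ 0) (E : ℂ × ℂ → F) (p : ℂ × ℂ) (s : ℂ) :
    kernelIntegrand τ E (qFlow τ (-τ) p) s = kernelIntegrand τ E p (s - τ) := by
  rw [kernelIntegrand, kernelIntegrand, qFlow_qFlow, qKernel_sub_self hτ, ← sub_eq_add_neg]

theorem kernelIntegrand_line_qFlow_neg_self (hτ : τ ≠ 0) (E : ℂ × ℂ → F) (p : ℂ × ℂ)
    (y x : ℝ) : kernelIntegrand τ E (qFlow τ (-τ) p) (x + y * I) =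
      kernelIntegrand τ E p ((x - τ.re : ℝ) + (y - τ.im : ℝ) * I) := by
  rw [kernelIntegrand_qFlow_neg_self hτ]
  congr 1
  apply Complex.ext <;> simp

theorem integral_kernelIntegrand_neg_sub [CompleteSpace F] (hτ : 0 < τ.im)
    (hE : IsDecayingOn n E (deepDomain τ A B w) Λ) (hw : depthThreshold τ A B ≤ w)
    (hη : η ∈ Ioo 0 τ.im) (hp : p ∈ deepDomain τ (A + η) (B - η) w)
    (hi₁ : Integrable fun x : ℝ => kernelIntegrand τ E p (x + (-η : ℝ) * I))
    (hi₂ : Integrable fun x : ℝ => kernelIntegrand τ E p (x + η * I)) :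
    (∫ x : ℝ, kernelIntegrand τ E p (x + (-η : ℝ) * I)) - ∫ x : ℝ, kernelIntegrand τ E p (x + η * I)
      = E p := by
  have hτ₀ := ne_zero_of_im_pos hτ
  have hmem : ∀ s : ℂ, s.im ∈ [[-η, η]] → qFlow τ s p ∈ deepDomain τ A B w := fun s hs => by
    rw [uIcc_of_le (by linarith [hη.1])] at hs
    exact qFlow_mem_deepDomain hτ₀ hp (by linarith [hp.2.1, hs.1]) (by linarith [hp.2.2.1, hs.2])
  have hpole : ∀ y : ℝ, y ≠ 0 → (fun x : ℝ => kernelIntegrand τ E p (x + y * I)) = fun x : ℝ =>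
      (x + y * I : ℂ)⁻¹ • regularizedKernel τ (x + y * I) • E (qFlow τ (x + y * I) p) :=
    fun y hy => funext fun x => kernelIntegrand_eq_inv_smul E p (add_mul_I_ne_zero x hy)
  have hη₀ := hη.1.ne'
  rw [hpole _ (neg_ne_zero.2 hη₀)] at hi₁ ⊢
  rw [hpole _ hη₀] at hi₂ ⊢
  have hd : ∀ s : ℂ, s.im ∈ [[-η, η]] →
      DifferentiableAt ℂ (fun s => regularizedKernel τ s • E (qFlow τ s p)) s := fun s hs => by
    have him := hs
    rw [uIcc_of_le (by linarith [hη.1])] at him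
    exact (differentiableAt_regularizedKernel hτ ((abs_le.2 him).trans_lt hη.2)).smul
      ((hE.differentiableOn.differentiableAt
        ((isOpen_deepDomain τ A B w).mem_nhds (hmem s hs))).comp s
        (differentiable_qFlow_time τ p s))
  have hends : Tendsto (fun s => s⁻¹ • regularizedKernel τ s • E (qFlow τ s p))
      (stripEnds [[-η, η]]) (𝓝 0) := by
    refine (tendsto_kernelIntegrand_stripEnds hτ hE hw hp.1 hmem).congr' ?_
    filter_upwards [(tendsto_comap.mono_left inf_le_left :
      Tendsto _ (stripEnds [[-η, η]]) _).eventually_gt_atTop 0] with s hs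
    exact kernelIntegrand_eq_inv_smul E p fun h => by simp [h] at hs
  rw [integral_horizontal_sub_eq_residue hη.1 hd hends hi₁ hi₂, regularizedKernel_zero hτ₀,
    smul_inv_smul₀ two_pi_I_ne_zero, qFlow_zero]

theorem kernelIntegral_sub_eq_source [CompleteSpace F] (hτ : 0 < τ.im)
    (hE : IsDecayingOn n E (deepDomain τ A B w) Λ) (hw : depthThreshold τ A B ≤ w)
    (hη : η ∈ Ioo 0 τ.im) (hp : p ∈ deepDomain τ (A + η) (B - η) w) :
    kernelIntegral τ E (τ.im - η) (qFlow τ (-τ) p) - kernelIntegral τ E η p = E p := by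
  have hτ₀ := ne_zero_of_im_pos hτ
  have hη' : τ.im - η ∈ Ioo 0 τ.im := ⟨sub_pos.2 hη.2, sub_lt_self _ hη.1⟩
  have hp' : qFlow τ (-τ) p ∈ deepDomain τ (A - (τ.im - η)) (B - (τ.im - η)) w :=
    qFlow_mem_deepDomain hτ₀ hp (by rw [neg_im]; linarith [hp.2.1])
      (by rw [neg_im]; linarith [hp.2.2.1, hη.1])
  have hshift := kernelIntegrand_line_qFlow_neg_self hτ₀ E p (τ.im - η)
  rw [sub_sub_cancel_left] at hshift
  have hi₁ : Integrable fun x : ℝ => kernelIntegrand τ E p (x + (-η : ℝ) * I) := by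
    have hi := (integrable_kernelIntegrand_line hτ hE hw hη' hp').comp_add_right τ.re
    simp only [hshift, add_sub_cancel_right] at hi
    exact hi
  have hi₂ : Integrable fun x : ℝ => kernelIntegrand τ E p (x + η * I) :=
    integrable_kernelIntegrand_line hτ hE hw hη
      (deepDomain_subset (by linarith [hη.1]) le_rfl hp)
  rw [kernelIntegral, funext hshift, integral_sub_right_eq_self
    (fun x : ℝ => kernelIntegrand τ E p (x + (-η : ℝ) * I)) τ.re, kernelIntegral]
  exact integral_kernelIntegrand_neg_sub hτ hE hw hη hp hi₁ hi₂

end Residue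

section Holomorphy

open Set Metric Topology MeasureTheory

variable {F : Type*} [NormedAddCommGroup F] [NormedSpace ℂ F]
  {τ s : ℂ} {p : ℂ × ℂ} {E : ℂ × ℂ → F} {A B w Λ y : ℝ} {n : ℕ}

theorem inv_one_add_sq_le {t u : ℝ} (h : |u - t| ≤ 1) :
    (1 + u ^ 2)⁻¹ ≤ 3 * (1 + t ^ 2)⁻¹ := by
  rw [← div_eq_mul_inv, ← one_div, div_le_div_iff₀ (by positivity) (by positivity)]
  have := abs_le.1 h
  nlinarith [sq_nonneg (u + (u - t))]

theorem fderiv_qFlow (τ s : ℂ) (p : ℂ × ℂ) : fderiv ℂ (qFlow τ s) p =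
    exp (-(2 * Real.pi * I * s)) • (ContinuousLinearMap.inl ℂ ℂ ℂ).comp (.fst ℂ ℂ ℂ) +
      (ContinuousLinearMap.inr ℂ ℂ ℂ).comp (.snd ℂ ℂ ℂ) := by
  have hfst : HasFDerivAt (fun p : ℂ × ℂ => p.1 * exp (-(2 * Real.pi * I * s)))
      (exp (-(2 * Real.pi * I * s)) • ContinuousLinearMap.fst ℂ ℂ ℂ) p :=
    hasFDerivAt_fst.mul_const _
  have hsnd : HasFDerivAt (fun p : ℂ × ℂ => p.2 + s / τ) (ContinuousLinearMap.snd ℂ ℂ ℂ) p :=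
    hasFDerivAt_snd.add_const _
  refine (hfst.prodMk hsnd).fderiv.trans ?_
  ext <;> simp

theorem continuous_fderiv_qFlow_time (τ : ℂ) (p : ℂ × ℂ) :
    Continuous fun s => fderiv ℂ (qFlow τ s) p := by
  simp only [fderiv_qFlow]
  fun_prop

theorem fderiv_kernelIntegrand (hE : DifferentiableOn ℂ E (deepDomain τ A B w))
    (hmem : qFlow τ s p ∈ deepDomain τ A B w) :
    fderiv ℂ (fun p => kernelIntegrand τ E p s) p =
      qKernel τ s • (fderiv ℂ E (qFlow τ s p)).comp (fderiv ℂ (qFlow τ s) p) :=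
  (((hE.differentiableAt ((isOpen_deepDomain τ A B w).mem_nhds hmem)).hasFDerivAt.comp p
    (differentiable_qFlow τ s p).hasFDerivAt).const_smul (qKernel τ s)).fderiv

theorem continuous_qKernel_line (hτ : 0 < τ.im) (hy : y ∈ Ioo 0 τ.im) :
    Continuous fun x : ℝ => qKernel τ (x + y * I) :=
  continuous_iff_continuousAt.2 fun x =>
    ContinuousAt.comp (f := fun x : ℝ => (x + y * I : ℂ)) (differentiableAt_qKernel hτ
      (add_mul_I_ne_zero x hy.1.ne') (by rw [add_mul_I_im, abs_of_pos hy.1]; exact hy.2)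
        ).continuousAt (by fun_prop)

theorem aestronglyMeasurable_fderiv_kernelIntegrand [CompleteSpace F]
    [SecondCountableTopology F] (hτ : 0 < τ.im)
    (hE : DifferentiableOn ℂ E (deepDomain τ A B w)) (hy : y ∈ Ioo 0 τ.im)
    (hp : p ∈ deepDomain τ (A - y) (B - y) w) : AEStronglyMeasurable
      (fun x : ℝ => fderiv ℂ (fun p => kernelIntegrand τ E p (x + y * I)) p) := by
  have hline : Continuous fun x : ℝ => (x + y * I : ℂ) := by fun_prop
  have hderiv : StronglyMeasurable fun x : ℝ => fderiv ℂ E (qFlow τ (x + y * I) p) :=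
    ((measurable_fderiv ℂ E).comp
      ((differentiable_qFlow_time τ p).continuous.comp hline).measurable).stronglyMeasurable
  have hflow := ((continuous_fderiv_qFlow_time τ p).comp hline).stronglyMeasurable
  have hcomp := ((continuous_qKernel_line hτ hy).stronglyMeasurable.smul
    ((ContinuousLinearMap.compL ℂ (ℂ × ℂ) (ℂ × ℂ) F).continuous₂.comp_stronglyMeasurable
      (hderiv.prodMk hflow))).aestronglyMeasurable (μ := volume)
  refine hcomp.congr (.of_forall fun x => ?_)
  exact (fderiv_kernelIntegrand hE
    (qFlow_line_mem (ne_zero_of_im_pos hτ) hp (add_mul_I_im x y))).symm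

theorem exists_ball_norm_kernelIntegrand_le (hτ : 0 < τ.im)
    (hE : IsDecayingOn n E (deepDomain τ A B w) Λ) (hw : depthThreshold τ A B ≤ w)
    (hy : y ∈ Ioo 0 τ.im) (hp : p ∈ deepDomain τ (A - y) (B - y) w) :
    ∃ r > 0, ball p r ⊆ deepDomain τ (A - y) (B - y) w ∧ ∃ D, ∀ x : ℝ, ∀ p' ∈ ball p r,
      ‖kernelIntegrand τ E p' (x + y * I)‖ ≤ D * (1 + ((τ * p.2).re + x) ^ 2)⁻¹ := by
  have hτ₀ := ne_zero_of_im_pos hτ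
  obtain ⟨C, hC, hK⟩ := exists_norm_qKernel_line_le hτ hy
  have hre : ContinuousAt (fun p' : ℂ × ℂ => |(τ * p'.2).re - (τ * p.2).re|) p := by fun_prop
  have hnear : ∀ᶠ p' in 𝓝 p, |(τ * p'.2).re - (τ * p.2).re| < 1 :=
    hre.eventually (gt_mem_nhds (by simp))
  obtain ⟨r, hr, hball⟩ := Metric.eventually_nhds_iff_ball.1
    (hnear.and ((isOpen_deepDomain _ _ _ _).mem_nhds hp))
  refine ⟨r, hr, fun p' hp' => (hball p' hp').2, C * |Λ| * sourceConst τ n * 3, fun x p' hp' => ?_⟩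
  obtain ⟨hclose, hmem⟩ := hball p' hp'
  have hV := qFlow_line_mem hτ₀ hmem (add_mul_I_im x y)
  have hd := (isDeep_of_mem_deepDomain hw hτ
    (deepDomain_subset (by linarith) le_rfl hV)).two_le_depth
  rw [depth_qFlow hτ₀ _ hmem.1] at hd
  have hsrc := sourceConst_pos hτ₀ n
  have hshift : |((τ * p'.2).re + x) - ((τ * p.2).re + x)| ≤ 1 := by
    rw [add_sub_add_right_eq_sub]
    exact hclose.le
  have hle := norm_kernelIntegrand_le hτ hE hw hmem.1 hV (hK x)
  rw [add_mul_I_re] at hle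
  calc ‖kernelIntegrand τ E p' (x + y * I)‖
      ≤ C * |Λ| * sourceConst τ n * (1 + ((τ * p'.2).re + x) ^ 2)⁻¹ := by
        refine hle.trans (mul_le_mul_of_nonneg_right ?_ (by positivity))
        refine (div_le_div_of_nonneg_right (b := C * |Λ| * sourceConst τ n) ?_
          (by positivity)).trans (div_le_self (by positivity) (one_le_pow₀ (by linarith)))
        gcongr
        exact le_abs_self Λ
    _ ≤ C * |Λ| * sourceConst τ n * (3 * (1 + ((τ * p.2).re + x) ^ 2)⁻¹) := by
        gcongr
        exact inv_one_add_sq_le hshift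
    _ = _ := by rw [mul_assoc _ 3]

theorem differentiableAt_kernelIntegral [CompleteSpace F] [SecondCountableTopology F]
    (hτ : 0 < τ.im) (hE : IsDecayingOn n E (deepDomain τ A B w) Λ)
    (hw : depthThreshold τ A B ≤ w) (hy : y ∈ Ioo 0 τ.im)
    (hp : p ∈ deepDomain τ (A - y) (B - y) w) : DifferentiableAt ℂ (kernelIntegral τ E y) p := by
  obtain ⟨r, hr, hsub, D, hD⟩ := exists_ball_norm_kernelIntegrand_le hτ hE hw hy hp
  refine differentiableAt_integral_of_norm_le hr
    ((integrable_inv_one_add_add_sq (τ * p.2).re).const_mul D)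
    (fun p' hp' => (continuous_kernelIntegrand_line hτ hE.differentiableOn hy
      (hsub hp')).aestronglyMeasurable)
    (aestronglyMeasurable_fderiv_kernelIntegrand hτ hE.differentiableOn hy hp)
    (fun x p' hp' => ?_) hD
  have hmem := qFlow_line_mem (ne_zero_of_im_pos hτ) (hsub hp') (add_mul_I_im x y)
  exact (((hE.differentiableOn.differentiableAt ((isOpen_deepDomain τ A B w).mem_nhds
    hmem)).comp p' (differentiable_qFlow τ _ p')).const_smul _).differentiableWithinAt

end Holomorphy

section PeriodicStrip

open Set

variable {F : Type*} {f : ℂ → F} {τ s t : ℂ} {y₁ y₂ M : ℝ}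

theorem sub_nsmul_eq_of_periodic_on_strip (hτ : 0 < τ.im)
    (hper : ∀ s : ℂ, s.im ∈ Ioo y₁ y₂ → (s - τ).im ∈ Ioo y₁ y₂ → f (s - τ) = f s) (k : ℕ)
    (hs : s.im ∈ Ioo y₁ y₂) (hk : (s - k * τ).im ∈ Ioo y₁ y₂) : f (s - k * τ) = f s := by
  induction k with
  | zero => simp
  | succ k ih =>
    have hstep : s - (k + 1 : ℕ) * τ = s - k * τ - τ := by
      push_cast
      ring
    have him : (s - k * τ).im = s.im - k * τ.im := by simp
    rw [hstep] at hk ⊢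
    have hmid : (s - k * τ).im ∈ Ioo y₁ y₂ := by
      rw [sub_im _ τ] at hk
      refine ⟨by linarith [hk.1], ?_⟩
      rw [him]
      nlinarith [hs.2, (Nat.cast_nonneg k : (0 : ℝ) ≤ k)]
    rw [hper _ hmid hk, ih hmid]

theorem sub_zsmul_eq_of_periodic_on_strip (hτ : 0 < τ.im)
    (hper : ∀ s : ℂ, s.im ∈ Ioo y₁ y₂ → (s - τ).im ∈ Ioo y₁ y₂ → f (s - τ) = f s) {j k : ℤ}
    (hj : (s - j * τ).im ∈ Ioo y₁ y₂) (hk : (s - k * τ).im ∈ Ioo y₁ y₂) :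
    f (s - j * τ) = f (s - k * τ) := by
  wlog hjk : j ≤ k generalizing j k
  · exact (this hk hj (le_of_not_ge hjk)).symm
  obtain ⟨d, rfl⟩ := Int.le.dest hjk
  have hd : s - (j + d : ℤ) * τ = s - j * τ - (d : ℕ) * τ := by
    push_cast
    ring
  rw [hd] at hk ⊢
  exact (sub_nsmul_eq_of_periodic_on_strip hτ hper d hj hk).symm

theorem eq_of_periodic_on_strip [NormedAddCommGroup F] [NormedSpace ℂ F] (hτ : 0 < τ.im)
    (hwidth : y₁ + τ.im < y₂)
    (hf : DifferentiableOn ℂ f (im ⁻¹' Ioo y₁ y₂))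
    (hper : ∀ s : ℂ, s.im ∈ Ioo y₁ y₂ → (s - τ).im ∈ Ioo y₁ y₂ → f (s - τ) = f s)
    (hM : ∀ s : ℂ, s.im ∈ Ioo y₁ y₂ → ‖f s‖ ≤ M) (hs : s.im ∈ Ioo y₁ y₂)
    (ht : t.im ∈ Ioo y₁ y₂) : f s = f t := by
  obtain ⟨y, hy₁, hy₂⟩ := exists_between (lt_sub_iff_add_lt.2 hwidth)
  have hfloor : ∀ s : ℂ, (s - ⌊(s.im - y) / τ.im⌋ * τ).im ∈ Ioo y₁ y₂ := fun s => by
    have hle := (le_div_iff₀ hτ).1 (Int.floor_le ((s.im - y) / τ.im))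
    have hlt := (div_lt_iff₀ hτ).1 (Int.lt_floor_add_one ((s.im - y) / τ.im))
    have him : (s - ⌊(s.im - y) / τ.im⌋ * τ).im = s.im - ⌊(s.im - y) / τ.im⌋ * τ.im := by simp
    rw [him]
    constructor <;> linarith
  let G : ℂ → F := fun s => f (s - ⌊(s.im - y) / τ.im⌋ * τ)
  have hG : ∀ (s : ℂ) (k : ℤ), (s - k * τ).im ∈ Ioo y₁ y₂ → G s = f (s - k * τ) := fun s k hk =>
    sub_zsmul_eq_of_periodic_on_strip hτ hper (hfloor s) hk
  have hopen : IsOpen (im ⁻¹' Ioo y₁ y₂) := isOpen_Ioo.preimage continuous_im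
  have hGd : Differentiable ℂ G := fun s => by
    set k := ⌊(s.im - y) / τ.im⌋
    have hshift : DifferentiableAt ℂ (fun s => s - k * τ) s := by fun_prop
    refine ((hf.differentiableAt
      (hopen.mem_nhds (hfloor s))).comp s hshift).congr_of_eventuallyEq ?_
    filter_upwards [hshift.continuousAt (hopen.mem_nhds (hfloor s))] with s' hs'
    exact hG s' k hs'
  have hGbdd : Bornology.IsBounded (range G) :=
    isBounded_iff_forall_norm_le.2 ⟨M, forall_mem_range.2 fun s => hM _ (hfloor s)⟩
  have hG₀ : ∀ s : ℂ, s.im ∈ Ioo y₁ y₂ → G s = f s := fun s hs => by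
    simpa using hG s 0 (by simpa using hs)
  rw [← hG₀ s hs, ← hG₀ t ht]
  exact hGd.apply_eq_apply_of_bounded hGbdd s t

end PeriodicStrip

section LinearEquation

open Set Filter

variable {F : Type*} [NormedAddCommGroup F] {τ : ℂ} {p : ℂ × ℂ} {S : Set (ℂ × ℂ)}
  {E E₁ E₂ u u₁ u₂ : ℂ × ℂ → F} {A B w D D₁ D₂ : ℝ}

/-- A bound `|u| ≤ D / √(max 1 (Im ξ))` on `S`, the decay expressed by finiteness of the norm
`N'`. -/
def RootDecayOn (u : ℂ × ℂ → F) (S : Set (ℂ × ℂ)) (D : ℝ) : Prop :=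
  ∀ p ∈ S, ‖u p‖ * √(max 1 p.2.im) ≤ D

theorem one_le_sqrt_max (t : ℝ) : 1 ≤ √(max 1 t) := Real.one_le_sqrt.2 (le_max_left _ _)

theorem RootDecayOn.norm_le (hu : RootDecayOn u S D) (hp : p ∈ S) : ‖u p‖ ≤ D :=
  (le_mul_of_one_le_right (norm_nonneg _) (one_le_sqrt_max _)).trans (hu p hp)

theorem RootDecayOn.sub (h₁ : RootDecayOn u₁ S D₁) (h₂ : RootDecayOn u₂ S D₂) :
    RootDecayOn (u₁ - u₂) S (D₁ + D₂) := fun p hp => by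
  refine (mul_le_mul_of_nonneg_right (norm_sub_le (u₁ p) (u₂ p)) (Real.sqrt_nonneg _)).trans ?_
  rw [add_mul]
  exact add_le_add (h₁ p hp) (h₂ p hp)

variable [NormedSpace ℂ F]

/-- Solutions of the linear difference equation `u(qz, ξ - 1) - u(z, ξ) = E(z, ξ)` that are
holomorphic and have root decay; the growth condition makes them unique. -/
structure IsTameSolution (τ : ℂ) (A B w : ℝ) (E u : ℂ × ℂ → F) : Prop where
  differentiableOn : DifferentiableOn ℂ u (deepDomain τ (A - τ.im) B w)
  exists_rootDecayOn : ∃ D, RootDecayOn u (deepDomain τ (A - τ.im) B w) D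
  qFlow_sub_eq : ∀ p ∈ deepDomain τ A B w, u (qFlow τ (-τ) p) - u p = E p

theorem IsTameSolution.sub (h₁ : IsTameSolution τ A B w E₁ u₁)
    (h₂ : IsTameSolution τ A B w E₂ u₂) : IsTameSolution τ A B w (E₁ - E₂) (u₁ - u₂) where
  differentiableOn := h₁.differentiableOn.sub h₂.differentiableOn
  exists_rootDecayOn :=
    let ⟨_, hD₁⟩ := h₁.exists_rootDecayOn
    let ⟨_, hD₂⟩ := h₂.exists_rootDecayOn
    ⟨_, hD₁.sub hD₂⟩
  qFlow_sub_eq p hp := by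
    rw [Pi.sub_apply, Pi.sub_apply, Pi.sub_apply, ← h₁.qFlow_sub_eq p hp,
      ← h₂.qFlow_sub_eq p hp]
    abel

theorem tendsto_im_qFlow_neg_real (hτ : 0 < τ.im) (p : ℂ × ℂ) :
    Tendsto (fun x : ℝ => (qFlow τ (-x : ℝ) p).2.im) atTop atTop := by
  have him : ∀ x : ℝ, (qFlow τ (-x : ℝ) p).2.im = p.2.im + x * (τ.im / normSq τ) := fun x => by
    rw [qFlow, add_im, div_im, ofReal_im, ofReal_re]
    ring
  simp only [him]
  exact tendsto_atTop_add_const_left _ _ (tendsto_id.atTop_mul_const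
    (div_pos hτ (normSq_pos.2 (ne_zero_of_im_pos hτ))))

theorem IsTameSolution.eq_zero (hτ : 0 < τ.im) (hAB : A < B)
    (hu : IsTameSolution τ A B w (0 : ℂ × ℂ → F) u) (hp : p ∈ deepDomain τ (A - τ.im) B w) :
    u p = 0 := by
  have hτ₀ := ne_zero_of_im_pos hτ
  obtain ⟨D, hD⟩ := hu.exists_rootDecayOn
  have hmem : ∀ s : ℂ, s.im ∈ Ioo (A - τ.im - logLevel ‖p.1‖) (B - logLevel ‖p.1‖) →
      qFlow τ s p ∈ deepDomain τ (A - τ.im) B w := fun s hs =>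
    qFlow_mem_deepDomain hτ₀ hp (by linarith [hs.1]) (by linarith [hs.2])
  have hreal : ∀ x : ℝ,
      (x : ℂ).im ∈ Ioo (A - τ.im - logLevel ‖p.1‖) (B - logLevel ‖p.1‖) := fun x => by
    rw [ofReal_im]
    exact ⟨by linarith [hp.2.1], by linarith [hp.2.2.1]⟩
  have hconst : ∀ x : ℝ, u (qFlow τ (-x : ℝ) p) = u p := fun x => by
    have heq := eq_of_periodic_on_strip (f := fun s => u (qFlow τ s p)) hτ (by linarith)
      (fun s hs => ((hu.differentiableOn.differentiableAt ((isOpen_deepDomain _ _ _ _).mem_nhds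
        (hmem s hs))).comp s (differentiable_qFlow_time τ p s)).differentiableWithinAt)
      (fun s hs hs' => ?_) (fun s hs => hD.norm_le (hmem s hs)) (hreal (-x)) (hreal 0)
    · simpa only [ofReal_zero, qFlow_zero] using heq
    · rw [sub_im] at hs'
      have hstep := hu.qFlow_sub_eq (qFlow τ s p)
        (qFlow_mem_deepDomain hτ₀ hp (by linarith [hs'.1]) (by linarith [hs.2]))
      rw [qFlow_qFlow, neg_add_eq_sub] at hstep
      exact sub_eq_zero.1 hstep
  by_contra hne
  have hlarge := (Real.tendsto_sqrt_atTop.comp (tendsto_atTop_mono (fun x => le_max_right 1 _)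
    (tendsto_im_qFlow_neg_real hτ p))).const_mul_atTop (norm_pos_iff.2 hne)
  obtain ⟨x, hx⟩ := (hlarge.eventually_gt_atTop D).exists
  have hle := hD _ (hmem _ (hreal (-x)))
  rw [hconst] at hle
  exact hle.not_gt hx

theorem IsTameSolution.eqOn (hτ : 0 < τ.im) (hAB : A < B) (h₁ : IsTameSolution τ A B w E u₁)
    (h₂ : IsTameSolution τ A B w E u₂) : EqOn u₁ u₂ (deepDomain τ (A - τ.im) B w) := fun p hp => by
  have hzero := h₁.sub h₂
  rw [sub_self] at hzero
  exact sub_eq_zero.1 (hzero.eq_zero hτ hAB hp)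

end LinearEquation

section WeightedBound

variable {F : Type*} [NormedAddCommGroup F] {τ : ℂ} {p : ℂ × ℂ} {E u : ℂ × ℂ → F}
  {A B w C D ε : ℝ} {n : ℕ} {S : Set (ℂ × ℂ)}

/-- The bound `|u| · growthWeight ≤ D / depth^n` on `S` satisfied by tame solutions. -/
def HasWeightedBound (τ : ℂ) (n : ℕ) (u : ℂ × ℂ → F) (S : Set (ℂ × ℂ)) (D : ℝ) : Prop :=
  ∀ p ∈ S, ‖u p‖ * growthWeight τ p ≤ D / depth τ p ^ n

theorem growthWeight_qFlow_of_div_im_eq_zero (hτ : τ ≠ 0) {s : ℂ} (hs : (s / τ).im = 0)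
    (hp : p.1 ≠ 0) : growthWeight τ (qFlow τ s p) = growthWeight τ p := by
  rw [growthWeight, depth_qFlow hτ s hp, qFlow, add_im, hs, add_zero, growthWeight]

theorem HasWeightedBound.norm_le (hu : HasWeightedBound τ n u S D) (hp : p ∈ S)
    (hd : 0 < depth τ p) : ‖u p‖ ≤ D / depth τ p ^ (n + 1) := by
  rw [pow_succ, ← div_div, le_div_iff₀ hd]
  exact (mul_le_mul_of_nonneg_left (le_max_left _ _) (norm_nonneg _)).trans (hu p hp)

theorem HasWeightedBound.rootDecayOn (hw : 1 ≤ w) (hD : 0 ≤ D)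
    (hu : HasWeightedBound τ n u (deepDomain τ A B w) D) :
    RootDecayOn u (deepDomain τ A B w) (D / w ^ n) := fun p hp => by
  have hwd := hp.2.2.2
  have hroot : √(max 1 p.2.im) ≤ growthWeight τ p :=
    (Real.sqrt_le_self_iff.2 (Or.inr (le_max_left _ _))).trans
      (max_le_max_right _ (hw.trans hwd.le))
  calc ‖u p‖ * √(max 1 p.2.im) ≤ ‖u p‖ * growthWeight τ p := by gcongr
    _ ≤ D / depth τ p ^ n := hu p hp
    _ ≤ D / w ^ n := by gcongr

theorem HasWeightedBound.of_center (hτ : 0 < τ.im) (hετ : 2 * ε ≤ τ.im)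
    (hεAB : 4 * ε ≤ B - A) (hε : 0 < ε) (hw : 0 ≤ w) (hD : 0 ≤ D)
    (hu : ∀ p ∈ deepDomain τ A B w, u (qFlow τ (-τ) p) - u p = E p)
    (hE : HasWeightedBound τ n E (deepDomain τ A B w) D)
    (hcenter : ∀ p ∈ deepDomain τ (A - τ.im) B w, A - τ.im + 2 * ε ≤ logLevel ‖p.1‖ →
      logLevel ‖p.1‖ ≤ B - 2 * ε → ‖u p‖ * growthWeight τ p ≤ C / depth τ p ^ n) :
    HasWeightedBound τ n u (deepDomain τ (A - τ.im) B w) (C + D) := by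
  have hτ₀ := ne_zero_of_im_pos hτ
  intro p hp
  have hd : 0 < depth τ p := hw.trans_lt hp.2.2.2
  have hweight : 0 ≤ growthWeight τ p := le_max_of_le_left hd.le
  rw [add_div]
  rcases lt_or_ge (logLevel ‖p.1‖) (A - τ.im + 2 * ε) with hlow | hlow
  · have hmem : ∀ {A'}, A' ≤ A → qFlow τ τ p ∈ deepDomain τ A' B w := fun h =>
      qFlow_mem_deepDomain hτ₀ hp (by linarith [hp.2.1]) (by linarith)
    have hc := hcenter _ (hmem (by linarith)) (by rw [logLevel_qFlow τ τ hp.1]; linarith [hp.2.1])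
      (by rw [logLevel_qFlow τ τ hp.1]; linarith)
    have hs := hE _ (hmem le_rfl)
    have heq := hu _ (hmem le_rfl)
    rw [qFlow_qFlow, neg_add_cancel, qFlow_zero, sub_eq_iff_eq_add'] at heq
    rw [growthWeight_qFlow_of_div_im_eq_zero hτ₀ (by simp [hτ₀]) hp.1, depth_qFlow hτ₀ τ hp.1]
      at hc hs
    rw [heq]
    exact ((mul_le_mul_of_nonneg_right (norm_add_le _ _) hweight).trans_eq (add_mul _ _ _)).trans
      (add_le_add hc hs)
  rcases le_or_gt (logLevel ‖p.1‖) (B - 2 * ε) with hhigh | hhigh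
  · exact (hcenter p hp hlow hhigh).trans (le_add_of_nonneg_right (by positivity))
  · have hpV : p ∈ deepDomain τ A B w := ⟨hp.1, by linarith, hp.2.2.1, hp.2.2.2⟩
    have hmem : qFlow τ (-τ) p ∈ deepDomain τ (A - τ.im) B w :=
      qFlow_mem_deepDomain hτ₀ hp (by rw [neg_im]; linarith) (by rw [neg_im]; linarith [hp.2.2.1])
    have hc := hcenter _ hmem (by rw [logLevel_qFlow τ _ hp.1, neg_im]; linarith)
      (by rw [logLevel_qFlow τ _ hp.1, neg_im]; linarith [hp.2.2.1])
    have heq : u p = u (qFlow τ (-τ) p) - E p := by rw [← hu p hpV, sub_sub_cancel]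
    rw [growthWeight_qFlow_of_div_im_eq_zero hτ₀ (by simp [hτ₀]) hp.1,
      depth_qFlow hτ₀ _ hp.1] at hc
    rw [heq]
    exact ((mul_le_mul_of_nonneg_right (norm_sub_le _ _) hweight).trans_eq (add_mul _ _ _)).trans
      (add_le_add hc (hE p hpV))

end WeightedBound

section LinearSolution

open Set

variable {F : Type*} [NormedAddCommGroup F] [NormedSpace ℂ F] {τ : ℂ} {p : ℂ × ℂ}
  {E : ℂ × ℂ → F} {A B w Λ l y ε : ℝ} {n : ℕ}

/-- The height of the integration line used at level `l`: the midpoint of the heights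
`y ∈ (0, Im τ)` for which `l + y ∈ (A, B)`. -/
noncomputable def lineHeight (τ : ℂ) (A B l : ℝ) : ℝ := (max 0 (A - l) + min τ.im (B - l)) / 2

/-- The solution operator of the linear difference equation. -/
noncomputable def linearSolution (τ : ℂ) (A B : ℝ) (E : ℂ × ℂ → F) (p : ℂ × ℂ) : F :=
  kernelIntegral τ E (lineHeight τ A B (logLevel ‖p.1‖)) p

theorem lineHeight_mem (hτ : 0 < τ.im) (hAB : A < B) (hl : l ∈ Ioo (A - τ.im) B) :
    lineHeight τ A B l ∈ Ioo (max 0 (A - l)) (min τ.im (B - l)) := by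
  have hlt : max 0 (A - l) < min τ.im (B - l) :=
    max_lt (lt_min hτ (by linarith [hl.2])) (lt_min (by linarith [hl.1]) (by linarith))
  unfold lineHeight
  constructor <;> linarith

theorem lineHeight_mem_Ioo (hτ : 0 < τ.im) (hAB : A < B)
    (hp : p ∈ deepDomain τ (A - τ.im) B w) :
    lineHeight τ A B (logLevel ‖p.1‖) ∈ Ioo 0 τ.im := by
  have h := lineHeight_mem hτ hAB ⟨hp.2.1, hp.2.2.1⟩
  exact ⟨(le_max_left _ _).trans_lt h.1, h.2.trans_le (min_le_left _ _)⟩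

theorem mem_deepDomain_lineHeight (hτ : 0 < τ.im) (hAB : A < B)
    (hp : p ∈ deepDomain τ (A - τ.im) B w) :
    p ∈ deepDomain τ (A - lineHeight τ A B (logLevel ‖p.1‖))
      (B - lineHeight τ A B (logLevel ‖p.1‖)) w := by
  have h := lineHeight_mem hτ hAB ⟨hp.2.1, hp.2.2.1⟩
  have h₁ := (le_max_right _ _).trans_lt h.1
  have h₂ := h.2.trans_le (min_le_right _ _)
  exact ⟨hp.1, by linarith, by linarith, hp.2.2.2⟩

theorem linearSolution_eq_kernelIntegral (hτ : 0 < τ.im) (hAB : A < B)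
    (hE : IsDecayingOn n E (deepDomain τ A B w) Λ) (hw : depthThreshold τ A B ≤ w)
    (hp : p ∈ deepDomain τ (A - τ.im) B w) (hy : y ∈ Ioo 0 τ.im)
    (hpy : p ∈ deepDomain τ (A - y) (B - y) w) :
    linearSolution τ A B E p = kernelIntegral τ E y p :=
  kernelIntegral_eq_of_mem hτ hE hw (lineHeight_mem_Ioo hτ hAB hp) hy
    (mem_deepDomain_lineHeight hτ hAB hp) hpy

theorem differentiableOn_linearSolution [CompleteSpace F] [SecondCountableTopology F]
    (hτ : 0 < τ.im) (hAB : A < B) (hE : IsDecayingOn n E (deepDomain τ A B w) Λ)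
    (hw : depthThreshold τ A B ≤ w) :
    DifferentiableOn ℂ (linearSolution τ A B E) (deepDomain τ (A - τ.im) B w) := by
  intro p hp
  have hy := lineHeight_mem_Ioo hτ hAB hp
  have hpy := mem_deepDomain_lineHeight hτ hAB hp
  refine ((differentiableAt_kernelIntegral hτ hE hw hy hpy).congr_of_eventuallyEq
    ?_).differentiableWithinAt
  filter_upwards [(isOpen_deepDomain _ _ _ _).mem_nhds hp,
    (isOpen_deepDomain _ _ _ _).mem_nhds hpy] with p' hp' hpy'
  exact linearSolution_eq_kernelIntegral hτ hAB hE hw hp' hy hpy'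

theorem linearSolution_qFlow_sub_eq [CompleteSpace F] (hτ : 0 < τ.im) (hAB : A < B)
    (hE : IsDecayingOn n E (deepDomain τ A B w) Λ) (hw : depthThreshold τ A B ≤ w)
    (hp : p ∈ deepDomain τ A B w) :
    linearSolution τ A B E (qFlow τ (-τ) p) - linearSolution τ A B E p = E p := by
  have hτ₀ := ne_zero_of_im_pos hτ
  obtain ⟨η, hη₀, hη⟩ := exists_between (lt_min hτ (lt_min (sub_pos.2 hp.2.1)
    (sub_pos.2 hp.2.2.1)))
  obtain ⟨hητ, hηA, hηB⟩ := (lt_min_iff.1 hη).imp_right lt_min_iff.1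
  have hpη : p ∈ deepDomain τ (A + η) (B - η) w :=
    ⟨hp.1, by linarith, by linarith, hp.2.2.2⟩
  have hshift : ∀ {A' B' : ℝ}, A' < logLevel ‖p.1‖ - τ.im → logLevel ‖p.1‖ - τ.im < B' →
      qFlow τ (-τ) p ∈ deepDomain τ A' B' w := fun h₁ h₂ =>
    qFlow_mem_deepDomain hτ₀ hp (by rwa [neg_im, ← sub_eq_add_neg])
      (by rwa [neg_im, ← sub_eq_add_neg])
  rw [linearSolution_eq_kernelIntegral hτ hAB hE hw (p := qFlow τ (-τ) p) (y := τ.im - η)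
      (hshift (by linarith [hp.2.1]) (by linarith [hp.2.2.1])) ⟨by linarith, by linarith⟩
      (hshift (by linarith) (by linarith [hp.2.2.1])),
    linearSolution_eq_kernelIntegral hτ hAB hE hw (p := p)
      (deepDomain_subset (by linarith) le_rfl hp) ⟨hη₀, hητ⟩
      (deepDomain_subset (by linarith) le_rfl hpη)]
  exact kernelIntegral_sub_eq_source hτ hE hw ⟨hη₀, hητ⟩ hpη

theorem IsDecayingOn.hasWeightedBound (hτ : 0 < τ.im)
    (hE : IsDecayingOn n E (deepDomain τ A B w) Λ) (hw : depthThreshold τ A B ≤ w) :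
    HasWeightedBound τ n E (deepDomain τ A B w) (Λ * sourceConst τ n) := fun p hp => by
  have hτ₀ := ne_zero_of_im_pos hτ
  have hdeep := isDeep_of_mem_deepDomain hw hτ (deepDomain_subset (by linarith) le_rfl hp)
  have hv := hE.norm_le p hp
  rw [← qFlow_zero τ p] at hdeep
  have hle := norm_smul_mul_growthWeight_le hτ₀ hp.1 hdeep (k := 1) (C := 1) (v := E p) (by simp)
    (by rwa [qFlow_zero])
  rw [one_smul, one_mul] at hle
  rw [qFlow_zero] at hdeep
  have hξ : 0 < ‖p.2‖ := by linarith [hdeep.one_le_norm]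
  have hd : 0 < depth τ p := by linarith [hdeep.two_le_depth]
  have hΛ : 0 ≤ Λ := by
    have := (norm_nonneg _).trans hv
    rwa [le_div_iff₀ (by positivity), zero_mul] at this
  have hsrc := sourceConst_pos hτ₀ n
  exact hle.trans (mul_le_of_le_one_right (by positivity)
    (inv_le_one_of_one_le₀ (le_add_of_nonneg_right (sq_nonneg _))))

theorem lineHeight_mem_Icc (hετ : 2 * ε ≤ τ.im) (hl₁ : A - τ.im + 2 * ε ≤ l)
    (hl₂ : l ≤ B - 2 * ε) : lineHeight τ A B l ∈ Icc ε (τ.im - ε) := by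
  have h₁ : 2 * ε ≤ min τ.im (B - l) := le_min hετ (by linarith)
  have h₂ : max 0 (A - l) ≤ τ.im - 2 * ε := max_le (by linarith) (by linarith)
  unfold lineHeight
  constructor <;> linarith [le_max_left 0 (A - l), min_le_left τ.im (B - l)]

variable (F) in
theorem exists_hasWeightedBound_linearSolution [CompleteSpace F] (hτ : 0 < τ.im) (hAB : A < B)
    (n : ℕ) : ∃ C, 0 < C ∧ ∀ {w Λ : ℝ} {E : ℂ × ℂ → F}, depthThreshold τ A B ≤ w → 0 ≤ Λ →
      IsDecayingOn n E (deepDomain τ A B w) Λ →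
      HasWeightedBound τ n (linearSolution τ A B E) (deepDomain τ (A - τ.im) B w) (C * Λ) := by
  obtain ⟨ε, hε, hεmin⟩ := exists_between (lt_min (half_pos hτ) (div_pos (sub_pos.2 hAB) four_pos))
  obtain ⟨hετ, hεAB⟩ := lt_min_iff.1 hεmin
  obtain ⟨K, hK, hbound⟩ := exists_norm_qKernel_mul_le hτ hε
  have hsrc := sourceConst_pos (ne_zero_of_im_pos hτ) n
  refine ⟨Real.pi * K * sourceConst τ n + sourceConst τ n, by positivity,
    fun {w Λ E} hw hΛ hE => ?_⟩
  have hw₀ : 0 ≤ w := le_trans (by unfold depthThreshold; positivity) hw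
  rw [add_mul, mul_right_comm, mul_comm (sourceConst τ n)]
  refine HasWeightedBound.of_center hτ (by linarith) (by linarith) hε hw₀ (by positivity)
    (fun p hp => linearSolution_qFlow_sub_eq hτ hAB hE hw hp) (hE.hasWeightedBound hτ hw)
    fun p hp hlow hhigh => ?_
  have hline := lineHeight_mem_Icc (by linarith) hlow hhigh
  refine norm_kernelIntegral_mul_growthWeight_le hτ hE hw (mem_deepDomain_lineHeight hτ hAB hp)
    fun x => hbound _ ?_
  rwa [add_mul_I_im]

theorem isTameSolution_linearSolution [CompleteSpace F] [SecondCountableTopology F]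
    (hτ : 0 < τ.im) (hAB : A < B) (hw : depthThreshold τ A B ≤ w) (hΛ : 0 ≤ Λ)
    (hE : IsDecayingOn n E (deepDomain τ A B w) Λ) :
    IsTameSolution τ A B w E (linearSolution τ A B E) where
  differentiableOn := differentiableOn_linearSolution hτ hAB hE hw
  exists_rootDecayOn :=
    have ⟨_, hC, hbound⟩ := exists_hasWeightedBound_linearSolution F hτ hAB n
    ⟨_, (hbound hw hΛ hE).rootDecayOn ((one_le_depthThreshold hτ.le A B).trans hw)
      (mul_nonneg hC.le hΛ)⟩
  qFlow_sub_eq _ hp := linearSolution_qFlow_sub_eq hτ hAB hE hw hp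

variable (F) in
theorem exists_hasWeightedBound_of_isTameSolution [CompleteSpace F] [SecondCountableTopology F]
    (hτ : 0 < τ.im) (hAB : A < B) (n : ℕ) :
    ∃ C, 0 < C ∧ ∀ {w Λ : ℝ} {E u : ℂ × ℂ → F}, depthThreshold τ A B ≤ w → 0 ≤ Λ →
      IsDecayingOn n E (deepDomain τ A B w) Λ → IsTameSolution τ A B w E u →
      HasWeightedBound τ n u (deepDomain τ (A - τ.im) B w) (C * Λ) := by
  obtain ⟨C, hC, hbound⟩ := exists_hasWeightedBound_linearSolution F hτ hAB n
  refine ⟨C, hC, fun hw hΛ hE hu p hp => ?_⟩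
  rw [hu.eqOn hτ hAB (isTameSolution_linearSolution hτ hAB hw hΛ hE) hp]
  exact hbound hw hΛ hE p hp

end LinearSolution

section NonlinearEquation

open Set Filter Topology

variable {F : Type*} [NormedAddCommGroup F] [NormedSpace ℂ F] {τ : ℂ} {p : ℂ × ℂ}
  {G : ℂ × ℂ → F → F} {u v u' v' : ℂ × ℂ → F} {A B w r C Λ κ : ℝ} {n : ℕ}
  {S : Set (ℂ × ℂ)}

/-- Holomorphic functions on `S` with values in the closed ball of radius `r`. -/
def holomorphicBall (F : Type*) [NormedAddCommGroup F] [NormedSpace ℂ F] (S : Set (ℂ × ℂ))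
    (r : ℝ) : Set (ℂ × ℂ → F) :=
  {u | DifferentiableOn ℂ u S ∧ ∀ p ∈ S, ‖u p‖ ≤ r}

/-- The nonlinearities `G` allowed in the equation `u(qz, ξ - 1) - u(z, ξ) = G((z, ξ), u(z, ξ))`:
holomorphic for `‖v‖ ≤ r`, with sup norm and Lipschitz constant at most `Λ / |ξ| ^ (n + 3)`. -/
structure IsDecayingNonlinearity (n : ℕ) (G : ℂ × ℂ → F → F) (S : Set (ℂ × ℂ)) (r Λ : ℝ) :
    Prop where
  differentiableAt : ∀ p ∈ S, ∀ v, ‖v‖ ≤ r → DifferentiableAt ℂ (Function.uncurry G) (p, v)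
  norm_le : ∀ p ∈ S, ∀ v, ‖v‖ ≤ r → ‖G p v‖ ≤ Λ / ‖p.2‖ ^ (n + 3)
  norm_sub_le : ∀ p ∈ S, ∀ v v', ‖v‖ ≤ r → ‖v'‖ ≤ r →
    ‖G p v - G p v'‖ ≤ Λ * ‖v - v'‖ / ‖p.2‖ ^ (n + 3)

theorem IsDecayingNonlinearity.isDecayingOn (hG : IsDecayingNonlinearity n G S r Λ)
    (hu : u ∈ holomorphicBall F S r) : IsDecayingOn n (fun p => G p (u p)) S Λ where
  differentiableOn p hp :=
    (hG.differentiableAt p hp (u p) (hu.2 p hp)).comp_differentiableWithinAt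
      (f := fun p => (p, u p)) p (differentiableWithinAt_id.prodMk (hu.1 p hp))
  norm_le p hp := hG.norm_le p hp (u p) (hu.2 p hp)

theorem IsDecayingNonlinearity.isDecayingOn_sub (hG : IsDecayingNonlinearity n G S r Λ)
    (hΛ : 0 ≤ Λ) (hu : u ∈ holomorphicBall F S r) (hv : v ∈ holomorphicBall F S r)
    (hκ : ∀ p ∈ S, ‖u p - v p‖ ≤ κ) :
    IsDecayingOn n ((fun p => G p (u p)) - fun p => G p (v p)) S (Λ * κ) where
  differentiableOn :=
    (hG.isDecayingOn hu).differentiableOn.sub (hG.isDecayingOn hv).differentiableOn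
  norm_le p hp := by
    refine (hG.norm_sub_le p hp _ _ (hu.2 p hp) (hv.2 p hp)).trans ?_
    have := hκ p hp
    gcongr

/-- The situation in which `G` defines a contraction by the factor `1 / 2`: `C` bounds the solution
operator of the linear equation and the depth `w` is large enough compared with `C` and `Λ`. -/
structure IsContractionRegime (τ : ℂ) (A B w C : ℝ) (n : ℕ) (G : ℂ × ℂ → F → F) (r Λ : ℝ) :
    Prop where
  im_pos : 0 < τ.im
  level_lt : A < B
  depthThreshold_le : depthThreshold τ A B ≤ w
  hasWeightedBound : ∀ {Λ : ℝ} {E u : ℂ × ℂ → F}, 0 ≤ Λ → IsDecayingOn n E (deepDomain τ A B w) Λ →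
    IsTameSolution τ A B w E u → HasWeightedBound τ n u (deepDomain τ (A - τ.im) B w) (C * Λ)
  isDecayingNonlinearity : IsDecayingNonlinearity n G (deepDomain τ A B w) r Λ
  const_nonneg : 0 ≤ C
  decay_nonneg : 0 ≤ Λ
  radius_nonneg : 0 ≤ r
  le_half : C * Λ / w ^ n ≤ 1 / 2

/-- Solutions with values in the closed ball of radius `r` of the nonlinear difference equation
`u(qz, ξ - 1) - u(z, ξ) = G((z, ξ), u(z, ξ))`. -/
structure IsNonlinearSolution (τ : ℂ) (A B w r : ℝ) (G : ℂ × ℂ → F → F) (u : ℂ × ℂ → F) :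
    Prop where
  isTameSolution : IsTameSolution τ A B w (fun p => G p (u p)) u
  norm_le : ∀ p ∈ deepDomain τ (A - τ.im) B w, ‖u p‖ ≤ r

theorem IsNonlinearSolution.mem_holomorphicBall (hu : IsNonlinearSolution τ A B w r G u) :
    u ∈ holomorphicBall F (deepDomain τ (A - τ.im) B w) r :=
  ⟨hu.isTameSolution.differentiableOn, hu.norm_le⟩

theorem holomorphicBall_mono {T : Set (ℂ × ℂ)} (h : S ⊆ T) :
    holomorphicBall F T r ⊆ holomorphicBall F S r :=
  fun _ hu => ⟨hu.1.mono h, fun p hp => hu.2 p (h hp)⟩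

namespace IsContractionRegime

variable (hG : IsContractionRegime τ A B w C n G r Λ)
include hG

theorem one_le_depth : 1 ≤ w :=
  (one_le_depthThreshold hG.im_pos.le A B).trans hG.depthThreshold_le

theorem deepDomain_subset_enlarged :
    deepDomain τ A B w ⊆ deepDomain τ (A - τ.im) B w :=
  deepDomain_subset (sub_le_self _ hG.im_pos.le) le_rfl

theorem isDecayingOn (hu : u ∈ holomorphicBall F (deepDomain τ (A - τ.im) B w) r) :
    IsDecayingOn n (fun p => G p (u p)) (deepDomain τ A B w) Λ :=
  hG.isDecayingNonlinearity.isDecayingOn (holomorphicBall_mono hG.deepDomain_subset_enlarged hu)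

theorem norm_sub_le_half (hu : u ∈ holomorphicBall F (deepDomain τ (A - τ.im) B w) r)
    (hv : v ∈ holomorphicBall F (deepDomain τ (A - τ.im) B w) r)
    (hu' : IsTameSolution τ A B w (fun p => G p (u p)) u')
    (hv' : IsTameSolution τ A B w (fun p => G p (v p)) v') (hκ₀ : 0 ≤ κ)
    (hκ : ∀ p ∈ deepDomain τ (A - τ.im) B w, ‖u p - v p‖ ≤ κ)
    (hp : p ∈ deepDomain τ (A - τ.im) B w) : ‖u' p - v' p‖ ≤ κ / 2 := by
  have hsub := hG.deepDomain_subset_enlarged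
  have hE := hG.isDecayingNonlinearity.isDecayingOn_sub hG.decay_nonneg
    (holomorphicBall_mono hsub hu) (holomorphicBall_mono hsub hv) fun p hp => hκ p (hsub hp)
  have hΛκ := mul_nonneg hG.decay_nonneg hκ₀
  have hbound := (hG.hasWeightedBound hΛκ hE (hu'.sub hv')).rootDecayOn hG.one_le_depth
    (mul_nonneg hG.const_nonneg hΛκ)
  calc ‖u' p - v' p‖ ≤ C * (Λ * κ) / w ^ n := hbound.norm_le hp
    _ = C * Λ / w ^ n * κ := by ring
    _ ≤ 1 / 2 * κ := mul_le_mul_of_nonneg_right hG.le_half hκ₀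
    _ = κ / 2 := by ring

theorem eqOn (hu : IsNonlinearSolution τ A B w r G u) (hv : IsNonlinearSolution τ A B w r G v) :
    EqOn u v (deepDomain τ (A - τ.im) B w) := fun p hp => by
  have hbound : ∀ k : ℕ, ∀ p ∈ deepDomain τ (A - τ.im) B w, ‖u p - v p‖ ≤ 2 * r / 2 ^ k := by
    intro k
    induction k with
    | zero =>
      intro p hp
      rw [pow_zero, div_one, two_mul]
      exact (norm_sub_le _ _).trans (add_le_add (hu.norm_le p hp) (hv.norm_le p hp))
    | succ k ih =>
      intro p hp
      rw [pow_succ, ← div_div]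
      exact hG.norm_sub_le_half hu.mem_holomorphicBall hv.mem_holomorphicBall hu.isTameSolution
        hv.isTameSolution (div_nonneg (mul_nonneg two_pos.le hG.radius_nonneg) (by positivity))
        ih hp
  have hlim : Tendsto (fun k : ℕ => 2 * r / 2 ^ k) atTop (𝓝 0) :=
    tendsto_const_nhds.div_atTop (tendsto_pow_atTop_atTop_of_one_lt one_lt_two)
  exact sub_eq_zero.1 (norm_le_zero_iff.1 (ge_of_tendsto' hlim fun k => hbound k p hp))

end IsContractionRegime

/-- The Picard iterates of the nonlinear difference equation, starting from `0`. -/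
noncomputable def picardIterate (τ : ℂ) (A B : ℝ) (G : ℂ × ℂ → F → F) : ℕ → ℂ × ℂ → F
  | 0 => 0
  | k + 1 => linearSolution τ A B fun p => G p (picardIterate τ A B G k p)

/-- The limit of the Picard iterates, written as a telescoping series. -/
noncomputable def picardLimit (τ : ℂ) (A B : ℝ) (G : ℂ × ℂ → F → F) (p : ℂ × ℂ) : F :=
  ∑' k, (picardIterate τ A B G (k + 1) p - picardIterate τ A B G k p)

theorem summable_div_two_pow (r : ℝ) : Summable fun k : ℕ => r / 2 ^ k := by
  simpa using summable_geometric_two' (2 * r)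

namespace IsContractionRegime

variable [CompleteSpace F] [SecondCountableTopology F]
  (hG : IsContractionRegime τ A B w C n G r Λ) (hr : C * Λ / w ^ n ≤ r)
include hG

theorem hasWeightedBound_linearSolution
    (hu : u ∈ holomorphicBall F (deepDomain τ (A - τ.im) B w) r) :
    HasWeightedBound τ n (linearSolution τ A B fun p => G p (u p)) (deepDomain τ (A - τ.im) B w)
      (C * Λ) :=
  hG.hasWeightedBound hG.decay_nonneg (hG.isDecayingOn hu) (isTameSolution_linearSolution hG.im_pos
    hG.level_lt hG.depthThreshold_le hG.decay_nonneg (hG.isDecayingOn hu))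

include hr

theorem picardIterate_mem_holomorphicBall (k : ℕ) :
    picardIterate τ A B G k ∈ holomorphicBall F (deepDomain τ (A - τ.im) B w) r := by
  induction k with
  | zero => exact ⟨differentiableOn_const _, fun p _ => by simpa [picardIterate] using
      hG.radius_nonneg⟩
  | succ k ih =>
    exact ⟨differentiableOn_linearSolution hG.im_pos hG.level_lt (hG.isDecayingOn ih)
      hG.depthThreshold_le, fun p hp => (((hG.hasWeightedBound_linearSolution ih).rootDecayOn
        hG.one_le_depth (mul_nonneg hG.const_nonneg hG.decay_nonneg)).norm_le hp).trans hr⟩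

theorem isTameSolution_picardIterate_succ (k : ℕ) :
    IsTameSolution τ A B w (fun p => G p (picardIterate τ A B G k p))
      (picardIterate τ A B G (k + 1)) :=
  isTameSolution_linearSolution hG.im_pos hG.level_lt hG.depthThreshold_le hG.decay_nonneg
    (hG.isDecayingOn (hG.picardIterate_mem_holomorphicBall hr k))

theorem norm_picardIterate_succ_sub_le (k : ℕ) :
    ∀ p ∈ deepDomain τ (A - τ.im) B w,
      ‖picardIterate τ A B G (k + 1) p - picardIterate τ A B G k p‖ ≤ r / 2 ^ k := by
  have hmem := hG.picardIterate_mem_holomorphicBall hr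
  induction k with
  | zero => simpa [picardIterate] using (hmem 1).2
  | succ k ih =>
    intro p hp
    rw [pow_succ, ← div_div]
    exact hG.norm_sub_le_half (hmem (k + 1)) (hmem k) (hG.isTameSolution_picardIterate_succ hr _)
      (hG.isTameSolution_picardIterate_succ hr _) (div_nonneg hG.radius_nonneg (by positivity))
      ih hp

theorem tendsto_picardIterate (hp : p ∈ deepDomain τ (A - τ.im) B w) :
    Tendsto (fun k => picardIterate τ A B G k p) atTop (𝓝 (picardLimit τ A B G p)) := by
  have hsum : Summable fun k => picardIterate τ A B G (k + 1) p - picardIterate τ A B G k p :=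
    .of_norm_bounded (summable_div_two_pow r) fun k => hG.norm_picardIterate_succ_sub_le hr k p hp
  refine hsum.hasSum.tendsto_sum_nat.congr fun k => ?_
  rw [Finset.sum_range_sub fun k => picardIterate τ A B G k p]
  simp [picardIterate]

theorem norm_picardLimit_le (hp : p ∈ deepDomain τ (A - τ.im) B w) :
    ‖picardLimit τ A B G p‖ ≤ r :=
  le_of_tendsto' (hG.tendsto_picardIterate hr hp).norm
    fun k => (hG.picardIterate_mem_holomorphicBall hr k).2 p hp

theorem hasWeightedBound_picardLimit :
    HasWeightedBound τ n (picardLimit τ A B G) (deepDomain τ (A - τ.im) B w) (C * Λ) :=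
  fun p hp => le_of_tendsto'
    (((hG.tendsto_picardIterate hr hp).comp (tendsto_add_atTop_nat 1)).norm.mul_const _) fun k =>
      hG.hasWeightedBound_linearSolution (hG.picardIterate_mem_holomorphicBall hr k) p hp

theorem picardLimit_qFlow_sub_eq (hp : p ∈ deepDomain τ A B w) :
    picardLimit τ A B G (qFlow τ (-τ) p) - picardLimit τ A B G p =
      G p (picardLimit τ A B G p) := by
  have hpU := hG.deepDomain_subset_enlarged hp
  have hflow : qFlow τ (-τ) p ∈ deepDomain τ (A - τ.im) B w :=
    qFlow_mem_deepDomain (ne_zero_of_im_pos hG.im_pos) hp (by rw [neg_im]; linarith [hp.2.1])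
      (by rw [neg_im]; linarith [hp.2.2.1, hG.im_pos])
  have hlim := hG.tendsto_picardIterate hr hpU
  have hleft := ((hG.tendsto_picardIterate hr hflow).sub hlim).comp (tendsto_add_atTop_nat 1)
  have hright : Tendsto (fun k => G p (picardIterate τ A B G k p)) atTop
      (𝓝 (G p (picardLimit τ A B G p))) := by
    have hzero := ((tendsto_iff_norm_sub_tendsto_zero.1 hlim).const_mul Λ).div_const
      (‖p.2‖ ^ (n + 3))
    rw [mul_zero, zero_div] at hzero
    exact tendsto_iff_norm_sub_tendsto_zero.2 (squeeze_zero (fun _ => norm_nonneg _)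
      (fun k => hG.isDecayingNonlinearity.norm_sub_le p hp _ _
        ((hG.picardIterate_mem_holomorphicBall hr k).2 p hpU) (hG.norm_picardLimit_le hr hpU))
      hzero)
  exact tendsto_nhds_unique hleft (hright.congr fun k =>
    ((hG.isTameSolution_picardIterate_succ hr k).qFlow_sub_eq p hp).symm)

theorem isNonlinearSolution_picardLimit :
    IsNonlinearSolution τ A B w r G (picardLimit τ A B G) where
  norm_le _ hp := hG.norm_picardLimit_le hr hp
  isTameSolution :=
    { differentiableOn := differentiableOn_tsum_of_norm_le (isOpen_deepDomain _ _ _ _)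
        (summable_div_two_pow r) (fun k => (hG.picardIterate_mem_holomorphicBall hr (k + 1)).1.sub
          (hG.picardIterate_mem_holomorphicBall hr k).1) (hG.norm_picardIterate_succ_sub_le hr)
      exists_rootDecayOn := ⟨_, (hG.hasWeightedBound_picardLimit hr).rootDecayOn hG.one_le_depth
        (mul_nonneg hG.const_nonneg hG.decay_nonneg)⟩
      qFlow_sub_eq := fun _ hp => hG.picardLimit_qFlow_sub_eq hr hp }

end IsContractionRegime

end NonlinearEquation

section ConjugacyNonlinearity

open Metric

variable {p v : ℂ × ℂ} {Δ₁ Δ₂ : ℂ × ℂ → ℂ} {Ω S : Set (ℂ × ℂ)} {M r η : ℝ} {n : ℕ}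

/-- The point `(z (1 + g), ξ + h)`, for `p = (z, ξ)` and `v = (h, g)`. -/
def perturb (p v : ℂ × ℂ) : ℂ × ℂ := (p.1 * (1 + v.2), p.2 + v.1)

/-- The right-hand side of the conjugacy system as a function of the unknown `v = (h, g)`. -/
def conjugacyNonlinearity (Δ₁ Δ₂ : ℂ × ℂ → ℂ) (p v : ℂ × ℂ) : ℂ × ℂ :=
  (Δ₂ (perturb p v), (1 + v.2) * Δ₁ (perturb p v))

theorem norm_one_add_snd_le (v : ℂ × ℂ) : ‖1 + v.2‖ ≤ 1 + ‖v‖ :=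
  (norm_add_le _ _).trans (by rw [norm_one]; gcongr; exact norm_snd_le v)

theorem one_sub_norm_le_norm_one_add_snd (v : ℂ × ℂ) : 1 - ‖v‖ ≤ ‖1 + v.2‖ := by
  have h := norm_sub_le_norm_add 1 v.2
  rw [norm_one] at h
  linarith [norm_snd_le v]

theorem norm_sub_norm_le_norm_perturb_snd (p v : ℂ × ℂ) : ‖p.2‖ - ‖v‖ ≤ ‖(perturb p v).2‖ :=
  (sub_le_sub_left (norm_fst_le v) _).trans (norm_sub_le_norm_add _ _)

theorem IsDecayingOn.norm_perturb_le {Δ : ℂ × ℂ → ℂ} (hΔ : IsDecayingOn n Δ Ω M) (hM : 0 ≤ M)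
    (hv : ‖v‖ ≤ 1) (hp : 2 ≤ ‖p.2‖) (hmem : perturb p v ∈ Ω) :
    ‖Δ (perturb p v)‖ ≤ 2 ^ (n + 3) * M / ‖p.2‖ ^ (n + 3) := by
  have hhalf : ‖p.2‖ / 2 ≤ ‖(perturb p v).2‖ := by
    linarith [norm_sub_norm_le_norm_perturb_snd p v]
  calc ‖Δ (perturb p v)‖ ≤ M / ‖(perturb p v).2‖ ^ (n + 3) := hΔ.norm_le _ hmem
    _ ≤ M / (‖p.2‖ / 2) ^ (n + 3) := by gcongr
    _ = 2 ^ (n + 3) * M / ‖p.2‖ ^ (n + 3) := by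
        rw [div_pow, div_div_eq_mul_div, mul_comm]

theorem norm_conjugacyNonlinearity_le (h₁ : IsDecayingOn n Δ₁ Ω M) (h₂ : IsDecayingOn n Δ₂ Ω M)
    (hM : 0 ≤ M) (hv : ‖v‖ ≤ 1) (hp : 2 ≤ ‖p.2‖) (hmem : perturb p v ∈ Ω) :
    ‖conjugacyNonlinearity Δ₁ Δ₂ p v‖ ≤ 2 ^ (n + 4) * M / ‖p.2‖ ^ (n + 3) := by
  have hg : ‖1 + v.2‖ ≤ 2 := (norm_one_add_snd_le v).trans (by linarith)
  have hbound : 2 ^ (n + 4) * M / ‖p.2‖ ^ (n + 3) =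
      2 * (2 ^ (n + 3) * M / ‖p.2‖ ^ (n + 3)) := by ring
  rw [conjugacyNonlinearity, Prod.norm_mk, hbound, norm_mul]
  exact max_le ((h₂.norm_perturb_le hM hv hp hmem).trans
    (le_mul_of_one_le_left (by positivity) one_le_two))
    (mul_le_mul hg (h₁.norm_perturb_le hM hv hp hmem) (norm_nonneg _) two_pos.le)

theorem differentiableAt_uncurry_conjugacyNonlinearity (hΩ : IsOpen Ω)
    (h₁ : DifferentiableOn ℂ Δ₁ Ω) (h₂ : DifferentiableOn ℂ Δ₂ Ω) (hmem : perturb p v ∈ Ω) :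
    DifferentiableAt ℂ (Function.uncurry (conjugacyNonlinearity Δ₁ Δ₂)) (p, v) := by
  have hperturb : DifferentiableAt ℂ (fun x : (ℂ × ℂ) × (ℂ × ℂ) => perturb x.1 x.2) (p, v) := by
    unfold perturb
    fun_prop
  have hcomp : ∀ {Δ : ℂ × ℂ → ℂ}, DifferentiableOn ℂ Δ Ω →
      DifferentiableAt ℂ (fun x : (ℂ × ℂ) × (ℂ × ℂ) => Δ (perturb x.1 x.2)) (p, v) := fun hΔ =>
    (hΔ.differentiableAt (hΩ.mem_nhds hmem)).comp (f := fun x => perturb x.1 x.2) (p, v) hperturb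
  exact (hcomp h₂).prodMk (DifferentiableAt.mul (by fun_prop) (hcomp h₁))

theorem isDecayingNonlinearity_conjugacyNonlinearity (hΩ : IsOpen Ω)
    (h₁ : IsDecayingOn n Δ₁ Ω M) (h₂ : IsDecayingOn n Δ₂ Ω M) (hM : 0 ≤ M) (hη : 0 < η)
    (hrη : r + η ≤ 1) (hS : ∀ p ∈ S, 2 ≤ ‖p.2‖)
    (hmem : ∀ p ∈ S, ∀ v, ‖v‖ ≤ r + η → perturb p v ∈ Ω) :
    IsDecayingNonlinearity n (conjugacyNonlinearity Δ₁ Δ₂) S r (2 ^ (n + 4) * M * (1 + 2 / η)) := by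
  have hdiff : ∀ p ∈ S, ∀ v, ‖v‖ ≤ r + η →
      DifferentiableAt ℂ (Function.uncurry (conjugacyNonlinearity Δ₁ Δ₂)) (p, v) := fun p hp v hv =>
    differentiableAt_uncurry_conjugacyNonlinearity hΩ h₁.differentiableOn h₂.differentiableOn
      (hmem p hp v hv)
  have hbound : ∀ p ∈ S, ∀ v, ‖v‖ ≤ r + η →
      ‖conjugacyNonlinearity Δ₁ Δ₂ p v‖ ≤ 2 ^ (n + 4) * M / ‖p.2‖ ^ (n + 3) := fun p hp v hv =>
    norm_conjugacyNonlinearity_le h₁ h₂ hM (hv.trans hrη) (hS p hp) (hmem p hp v hv)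
  refine ⟨fun p hp v hv => hdiff p hp v (by linarith), fun p hp v hv => ?_,
    fun p hp v v' hv hv' => ?_⟩
  · refine (hbound p hp v (by linarith)).trans (div_le_div_of_nonneg_right ?_ (by positivity))
    exact le_mul_of_one_le_right (by positivity) (le_add_of_nonneg_right (by positivity))
  · have hball : ∀ x ∈ ball (0 : ℂ × ℂ) (r + η), ‖x‖ ≤ r + η := fun x hx =>
      (mem_ball_zero_iff.1 hx).le
    calc _ ≤ 2 * (2 ^ (n + 4) * M / ‖p.2‖ ^ (n + 3)) / η * ‖v - v'‖ :=
          norm_sub_le_of_norm_le_on_ball (c := (0 : ℂ × ℂ)) hη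
            (fun x hx => ((hdiff p hp x (hball x hx)).comp (f := fun v => (p, v)) x
              (by fun_prop)).differentiableWithinAt)
            (fun x hx => hbound p hp x (hball x hx))
            (mem_closedBall_zero_iff.2 hv') (mem_closedBall_zero_iff.2 hv)
      _ = 2 ^ (n + 4) * M * (2 / η) * ‖v - v'‖ / ‖p.2‖ ^ (n + 3) := by ring
      _ ≤ 2 ^ (n + 4) * M * (1 + 2 / η) * ‖v - v'‖ / ‖p.2‖ ^ (n + 3) := by
          gcongr
          linarith

end ConjugacyNonlinearity

section Regime

open Filter

variable {τ : ℂ} {p v : ℂ × ℂ} {Δ₁ Δ₂ : ℂ × ℂ → ℂ} {a b a' b' R₀ M ρ r η : ℝ} {n : ℕ}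

theorem mem_interior_omegaDom (ha : ‖exp (2 * Real.pi * I * τ)‖ * a / 2 < ‖p.1‖)
    (hb : ‖p.1‖ < 2 * b) (hR : R₀ < ‖p.2‖) : p ∈ interior (omegaDom τ a b R₀) := by
  have hopen : IsOpen {p : ℂ × ℂ | ‖exp (2 * Real.pi * I * τ)‖ * a / 2 < ‖p.1‖ ∧
      ‖p.1‖ < 2 * b ∧ R₀ < ‖p.2‖} :=
    (isOpen_lt continuous_const continuous_fst.norm).inter
      ((isOpen_lt continuous_fst.norm continuous_const).inter
        (isOpen_lt continuous_const continuous_snd.norm))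
  refine mem_interior.2 ⟨_, ?_, hopen, ha, hb, hR⟩
  exact fun p hp => ⟨hp.1.le, hp.2.1.le, hp.2.2.le⟩

theorem perturb_mem_interior_omegaDom (hρ : ρ ≤ 1)
    (ha : ‖exp (2 * Real.pi * I * τ)‖ * a / 2 < a' * (1 - ρ)) (hb : b' * (1 + ρ) < 2 * b)
    (hpa : a' ≤ ‖p.1‖) (hpb : ‖p.1‖ ≤ b') (hpR : R₀ + 1 < ‖p.2‖) (hv : ‖v‖ ≤ ρ) :
    perturb p v ∈ interior (omegaDom τ a b R₀) := by
  have hlow := one_sub_norm_le_norm_one_add_snd v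
  have hupp := norm_one_add_snd_le v
  refine mem_interior_omegaDom ?_ ?_ ?_
  · rw [perturb, norm_mul]
    exact ha.trans_le (mul_le_mul hpa (by linarith) (by linarith) (norm_nonneg _))
  · rw [perturb, norm_mul]
    exact (mul_le_mul hpb (by linarith) (norm_nonneg _) ((norm_nonneg _).trans hpb)).trans_lt hb
  · linarith [norm_sub_norm_le_norm_perturb_snd p v]

theorem eventually_lt_norm_snd (hτ : 0 < τ.im) (A B R : ℝ) :
    ∀ᶠ w in atTop, ∀ p ∈ deepDomain τ A B w, R < ‖p.2‖ := by
  filter_upwards [eventually_ge_atTop (depthThreshold τ A B),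
    eventually_ge_atTop (2 * ‖τ‖ * R)] with w hw hwR p hp
  have hdeep := (isDeep_of_mem_deepDomain hw hτ
    (deepDomain_subset (sub_le_self A hτ.le) le_rfl hp)).depth_le_norm
  have hnorm : 0 < 2 * ‖τ‖ := by simpa using ne_zero_of_im_pos hτ
  exact lt_of_mul_lt_mul_left (hwR.trans_lt (hp.2.2.2.trans_le hdeep)) hnorm.le

theorem eventually_perturb_mem_interior_omegaDom (hτ : 0 < τ.im) (ha' : 0 < a') (hb' : 0 < b')
    (hρ : ρ ≤ 1) (ha : ‖exp (2 * Real.pi * I * τ)‖ * a / 2 < a' * (1 - ρ))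
    (hb : b' * (1 + ρ) < 2 * b) :
    ∀ᶠ w in atTop, ∀ p ∈ deepDomain τ (logLevel a') (logLevel b') w, ∀ v, ‖v‖ ≤ ρ →
      perturb p v ∈ interior (omegaDom τ a b R₀) := by
  filter_upwards [eventually_lt_norm_snd hτ (logLevel a') (logLevel b') (R₀ + 1)]
    with w hw p hp v hv
  have hp₀ : 0 < ‖p.1‖ := norm_pos_iff.2 hp.1
  exact perturb_mem_interior_omegaDom hρ ha hb ((logLevel_le_logLevel_iff ha' hp₀).1 hp.2.1.le)
    ((logLevel_le_logLevel_iff hp₀ hb').1 hp.2.2.1.le) (hw p hp) hv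

theorem eventually_div_pow_le (hn : n ≠ 0) (K : ℝ) {ε : ℝ} (hε : 0 < ε) :
    ∀ᶠ w in atTop, K / w ^ n ≤ ε :=
  (tendsto_const_nhds.div_atTop (tendsto_pow_atTop hn)).eventually_le_const hε

theorem exists_eventually_isContractionRegime (hτ : 0 < τ.im) (hn : n ≠ 0) (hM : 0 < M)
    (h₁ : IsDecayingOn n Δ₁ (interior (omegaDom τ a b R₀)) M)
    (h₂ : IsDecayingOn n Δ₂ (interior (omegaDom τ a b R₀)) M)
    (hr : 0 ≤ r) (hη : 0 < η) (hrη : r + η ≤ 1) (ha' : 0 < a') (hab' : a' < b')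
    (ha : ‖exp (2 * Real.pi * I * τ)‖ * a / 2 < a' * (1 - (r + η)))
    (hb : b' * (1 + (r + η)) < 2 * b) :
    ∃ C Λ, 0 < C ∧ 0 < Λ ∧ ∀ᶠ w in atTop, IsContractionRegime τ (logLevel a') (logLevel b') w C n
      (conjugacyNonlinearity Δ₁ Δ₂) r Λ := by
  have hlevel := logLevel_lt_logLevel ha' hab'
  obtain ⟨C, hC, hbound⟩ := exists_hasWeightedBound_of_isTameSolution (ℂ × ℂ) hτ hlevel n
  have hΛ : 0 < 2 ^ (n + 4) * M * (1 + 2 / η) := by positivity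
  refine ⟨C, _, hC, hΛ, ?_⟩
  filter_upwards [eventually_ge_atTop (depthThreshold τ (logLevel a') (logLevel b')),
    eventually_perturb_mem_interior_omegaDom hτ ha' (ha'.trans hab') hrη ha hb,
    eventually_lt_norm_snd hτ (logLevel a') (logLevel b') 2,
    eventually_div_pow_le hn (C * (2 ^ (n + 4) * M * (1 + 2 / η))) one_half_pos]
    with w hw hmem hnorm hhalf
  exact
    { im_pos := hτ
      level_lt := hlevel
      depthThreshold_le := hw
      hasWeightedBound := hbound hw
      isDecayingNonlinearity := isDecayingNonlinearity_conjugacyNonlinearity isOpen_interior h₁ h₂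
        hM.le hη hrη (fun p hp => (hnorm p hp).le) hmem
      const_nonneg := hC.le
      decay_nonneg := hΛ.le
      radius_nonneg := hr
      le_half := hhalf }

end Regime

section Membership

open Set Filter Topology

variable {τ : ℂ} {p : ℂ × ℂ} {a b a' b' δ δ' A B w : ℝ}

theorem depth_eq_neg_logLevel_norm (τ : ℂ) (hp : p.1 ≠ 0) :
    depth τ p = -logLevel ‖p.1 * exp (2 * Real.pi * I * τ * p.2)‖ := by
  rw [norm_mul, logLevel_mul (norm_ne_zero_iff.2 hp) (norm_ne_zero_iff.2 (exp_ne_zero _)),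
    mul_assoc _ τ, logLevel_norm_exp_two_pi_I_mul, depth]
  ring

theorem mem_sectDom_iff (ha : 0 < a) (hb : 0 < b) (hδ : 0 < δ) :
    p ∈ sectDom τ a b δ ↔ p.1 ≠ 0 ∧ logLevel a ≤ logLevel ‖p.1‖ ∧
      logLevel ‖p.1‖ ≤ logLevel b ∧ -logLevel δ ≤ depth τ p := by
  rcases eq_or_ne p.1 0 with hp | hp
  · simp [sectDom, hp, ha]
  have hp₀ := norm_pos_iff.2 hp
  have hexp : 0 < ‖p.1 * exp (2 * Real.pi * I * τ * p.2)‖ :=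
    norm_pos_iff.2 (mul_ne_zero hp (exp_ne_zero _))
  rw [logLevel_le_logLevel_iff ha hp₀, logLevel_le_logLevel_iff hp₀ hb,
    depth_eq_neg_logLevel_norm τ hp, neg_le_neg_iff, logLevel_le_logLevel_iff hexp hδ]
  simp only [sectDom, mem_ofPred_eq, ne_eq, hp, not_false_eq_true, true_and]

theorem sectDom'_eq_sectDom (τ : ℂ) (a b δ : ℝ) :
    sectDom' τ a b δ = sectDom τ (‖exp (2 * Real.pi * I * τ)‖ * a) b δ := rfl

theorem norm_exp_mul_pos (τ : ℂ) (ha : 0 < a) : 0 < ‖exp (2 * Real.pi * I * τ)‖ * a :=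
  mul_pos (norm_pos_iff.2 (exp_ne_zero _)) ha

theorem norm_exp_two_pi_I_mul_lt_one (hτ : 0 < τ.im) : ‖exp (2 * Real.pi * I * τ)‖ < 1 := by
  simpa [norm_exp] using mul_pos Real.two_pi_pos hτ

theorem logLevel_norm_exp_mul (τ : ℂ) (ha : 0 < a) :
    logLevel (‖exp (2 * Real.pi * I * τ)‖ * a) = logLevel a - τ.im := by
  rw [logLevel_mul (norm_ne_zero_iff.2 (exp_ne_zero _)) ha.ne', logLevel_norm_exp_two_pi_I_mul]
  ring

theorem sectDom_subset_deepDomain (ha' : 0 < a') (ha : a' < a) (hab : a ≤ b) (hb : b < b')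
    (hδ : 0 < δ) (hδδ' : δ < δ') :
    sectDom τ a b δ ⊆ deepDomain τ (logLevel a') (logLevel b') (-logLevel δ') := by
  have ha₀ := ha'.trans ha
  intro p hp
  obtain ⟨hp₀, hpa, hpb, hd⟩ := (mem_sectDom_iff ha₀ (ha₀.trans_le hab) hδ).1 hp
  exact ⟨hp₀, (logLevel_lt_logLevel ha' ha).trans_le hpa,
    hpb.trans_lt (logLevel_lt_logLevel (ha₀.trans_le hab) hb),
    (neg_lt_neg (logLevel_lt_logLevel hδ hδδ')).trans_le hd⟩

theorem deepDomain_subset_sectDom (ha : 0 < a) (hb : 0 < b) (hδ : 0 < δ) :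
    deepDomain τ (logLevel a) (logLevel b) (-logLevel δ) ⊆ sectDom τ a b δ := fun _ hp =>
  (mem_sectDom_iff ha hb hδ).2 ⟨hp.1, hp.2.1.le, hp.2.2.1.le, hp.2.2.2.le⟩

-- Push `p` into the interior of the level interval along the flow while increasing its depth.
theorem mem_closure_deepDomain (hτ : τ ≠ 0) (hAB : A < B) (hp : p.1 ≠ 0)
    (hA : A ≤ logLevel ‖p.1‖) (hB : logLevel ‖p.1‖ ≤ B) (hw : w ≤ depth τ p) :
    p ∈ closure (deepDomain τ A B w) := by
  set c := (A + B) / 2 - logLevel ‖p.1‖ with hc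
  let path : ℝ → ℂ × ℂ := fun t => qFlow τ ((t * c : ℝ) * I) (p.1, p.2 + t * I / τ)
  have hcont : Continuous path := by
    simp only [path, qFlow]
    fun_prop
  have hstart : path 0 = p := by simp [path, qFlow_zero]
  have hlim : Tendsto path (𝓝[>] 0) (𝓝 p) := by
    simpa only [hstart] using hcont.continuousWithinAt.tendsto (x := 0)
  refine mem_closure_of_tendsto hlim ?_
  filter_upwards [Ioo_mem_nhdsGT one_pos] with t ht
  have him : ((t * c : ℝ) * I).im = t * c := by simp
  have hdepth : depth τ (p.1, p.2 + t * I / τ) = depth τ p + t := by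
    simp only [depth, mul_add, mul_div_cancel₀ _ hτ, add_im, mul_I_im, ofReal_re]
    ring
  refine qFlow_mem_deepDomain hτ (A := A - 1) (B := B + 1) ⟨hp, ?_, ?_, ?_⟩ ?_ ?_
  · dsimp only; linarith
  · dsimp only; linarith
  · rw [hdepth]; linarith [ht.1]
  · rw [him, hc]; dsimp only; nlinarith [ht.1, ht.2]
  · rw [him, hc]; dsimp only; nlinarith [ht.1, ht.2]

theorem sectDom_subset_closure_deepDomain (hτ : τ ≠ 0) (ha : 0 < a) (hab : a < b) (hδ : 0 < δ) :
    sectDom τ a b δ ⊆ closure (deepDomain τ (logLevel a) (logLevel b) (-logLevel δ)) :=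
  fun p hp => by
    obtain ⟨hp₀, hA, hB, hw⟩ := (mem_sectDom_iff ha (ha.trans hab) hδ).1 hp
    exact mem_closure_deepDomain hτ (logLevel_lt_logLevel ha hab) hp₀ hA hB hw

theorem tendsto_neg_logLevel_mul {c : ℝ} (hc : 0 < c) :
    Tendsto (fun δ => -logLevel (c * δ)) (𝓝[>] 0) atTop := by
  have hmul : Tendsto (fun δ : ℝ => c * δ) (𝓝[>] 0) (𝓝[>] 0) := by
    refine tendsto_nhdsWithin_iff.2 ⟨?_, ?_⟩
    · simpa using ((continuous_const_mul c).tendsto (0 : ℝ)).mono_left nhdsWithin_le_nhds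
    · filter_upwards [self_mem_nhdsWithin] with δ hδ using mul_pos hc hδ
  exact tendsto_neg_atBot_atTop.comp
    ((Real.tendsto_log_nhdsGT_zero.atBot_div_const Real.two_pi_pos).comp hmul)

end Membership

section Nprime

open Set

variable {F : Type*} [NormedAddCommGroup F] {S T : Set (ℂ × ℂ)} {u v h g : ℂ × ℂ → ℂ}
  {D D₁ D₂ : ℝ}

theorem RootDecayOn.mono_set {f : ℂ × ℂ → F} (hf : RootDecayOn f T D) (hST : S ⊆ T) :
    RootDecayOn f S D := fun p hp => hf p (hST hp)

theorem RootDecayOn.mono_norm {f : ℂ × ℂ → F} (hf : RootDecayOn f S D)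
    (huf : ∀ p, ‖u p‖ ≤ ‖f p‖) : RootDecayOn u S D := fun p hp =>
  (mul_le_mul_of_nonneg_right (huf p) (Real.sqrt_nonneg _)).trans (hf p hp)

theorem RootDecayOn.prodMk (hh : RootDecayOn h S D₁) (hg : RootDecayOn g S D₂) :
    RootDecayOn (fun p => (h p, g p)) S (max D₁ D₂) := fun p hp => by
  rw [Prod.norm_mk, max_mul_of_nonneg _ _ (Real.sqrt_nonneg _)]
  exact max_le_max (hh p hp) (hg p hp)

theorem RootDecayOn.norm_mem_upperBounds (hu : RootDecayOn u S D) :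
    D ∈ upperBounds ((fun p => ‖u p‖) '' S) :=
  forall_mem_image.2 fun _ hp => hu.norm_le hp

theorem RootDecayOn.norm_mul_sqrt_mem_upperBounds (hu : RootDecayOn u S D) :
    D ∈ upperBounds ((fun p => ‖u p‖ * √p.2.im) '' (S ∩ {p | 1 ≤ p.2.im})) :=
  forall_mem_image.2 fun p hp => by
    simpa only [max_eq_right (show 1 ≤ p.2.im from hp.2)] using hu p hp.1

theorem RootDecayOn.nprime_le (hu : RootDecayOn u S D) (hD : 0 ≤ D) : nprime S u ≤ 2 * D :=
  (add_le_add (Real.sSup_le hu.norm_mem_upperBounds hD)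
    (Real.sSup_le hu.norm_mul_sqrt_mem_upperBounds hD)).trans_eq (two_mul D).symm

theorem nprime_nonneg (S : Set (ℂ × ℂ)) (u : ℂ × ℂ → ℂ) : 0 ≤ nprime S u :=
  add_nonneg (Real.sSup_nonneg (forall_mem_image.2 fun _ _ => norm_nonneg _))
    (Real.sSup_nonneg (forall_mem_image.2 fun _ _ => by positivity))

theorem rootDecayOn_nprime (hsup : BddAbove ((fun p => ‖u p‖) '' S))
    (hroot : BddAbove ((fun p => ‖u p‖ * √p.2.im) '' (S ∩ {p | 1 ≤ p.2.im}))) :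
    RootDecayOn u S (nprime S u) := fun p hp => by
  rcases le_total 1 p.2.im with him | him
  · rw [max_eq_right him]
    exact (le_csSup hroot (mem_image_of_mem _ ⟨hp, him⟩)).trans (le_add_of_nonneg_left
      (Real.sSup_nonneg (forall_mem_image.2 fun _ _ => norm_nonneg _)))
  · rw [max_eq_left him, Real.sqrt_one, mul_one]
    exact (le_csSup hsup (mem_image_of_mem _ hp)).trans (le_add_of_nonneg_right
      (Real.sSup_nonneg (forall_mem_image.2 fun _ _ => by positivity)))

theorem nprime_congr (huv : EqOn u v S) : nprime S u = nprime S v := by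
  have hsup : (fun p => ‖u p‖) '' S = (fun p => ‖v p‖) '' S :=
    image_congr fun p hp => by rw [huv hp]
  have hroot : (fun p => ‖u p‖ * √p.2.im) '' (S ∩ {p | 1 ≤ p.2.im}) =
      (fun p => ‖v p‖ * √p.2.im) '' (S ∩ {p | 1 ≤ p.2.im}) :=
    image_congr fun p hp => by rw [huv hp.1]
  rw [nprime, nprime, hsup, hroot]

end Nprime

section Sector

variable {τ : ℂ} {p : ℂ × ℂ} {K x θ α : ℝ} {k n : ℕ}

/-- The constant turning a decay `K / depth ^ k` into `D / |ξ| ^ k` in the sector of opening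
parameter `θ`, where `Im (τξ) ≥ |τ| |ξ| sin θ`. -/
noncomputable def sectorConst (τ : ℂ) (K : ℝ) (k : ℕ) (θ : ℝ) : ℝ :=
  K * (2 / (‖τ‖ * Real.sin θ)) ^ k

theorem sectorConst_pos (hτ : τ ≠ 0) (hK : 0 < K) (hθ : 0 < θ) (hθπ : θ < Real.pi) (k : ℕ) :
    0 < sectorConst τ K k θ := by
  have hsin := Real.sin_pos_of_pos_of_lt_pi hθ hθπ
  exact mul_pos hK (pow_pos (div_pos two_pos (mul_pos (norm_pos_iff.2 hτ) hsin)) k)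

theorem sin_le_sin_of_le_of_le_pi_sub (hθ : 0 ≤ θ) (hα : θ ≤ α) (hαπ : α ≤ Real.pi - θ) :
    Real.sin θ ≤ Real.sin α := by
  have hmin := strictConcaveOn_sin_Icc.concaveOn.min_le_of_mem_Icc (x := θ) (y := Real.pi - θ)
    (z := α) ⟨hθ, by linarith⟩ ⟨by linarith, by linarith⟩ ⟨hα, hαπ⟩
  rwa [Real.sin_pi_sub, min_self] at hmin

theorem im_mul_eq_norm_mul_sin (z w : ℂ) : (z * w).im = ‖z‖ * ‖w‖ * Real.sin (arg z + arg w) := by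
  rw [Real.sin_add, mul_im, ← norm_mul_cos_arg z, ← norm_mul_sin_arg z, ← norm_mul_cos_arg w,
    ← norm_mul_sin_arg w]
  ring

theorem norm_mul_sin_le_im (hθ : 0 ≤ θ) {ξ : ℂ} (hl : θ - arg τ ≤ arg ξ)
    (hu : arg ξ ≤ Real.pi - θ - arg τ) : ‖τ‖ * Real.sin θ * ‖ξ‖ ≤ (τ * ξ).im := by
  rw [im_mul_eq_norm_mul_sin, mul_right_comm]
  gcongr
  exact sin_le_sin_of_le_of_le_pi_sub hθ (by linarith) (by linarith)

theorem IsDeep.le_sectorConst_div_norm_pow (hp : IsDeep τ p) (hτ : τ ≠ 0) (hK : 0 ≤ K)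
    (hkn : k ≤ n) (hx : x ≤ K / depth τ p ^ n) (hθ : 0 < θ) (hl : θ - arg τ ≤ arg p.2)
    (hu : arg p.2 ≤ Real.pi - θ - arg τ) : x ≤ sectorConst τ K k θ / ‖p.2‖ ^ k := by
  have := norm_pos_iff.2 hτ
  have hsin : 0 < Real.sin θ := Real.sin_pos_of_pos_of_lt_pi hθ (by linarith)
  have hξ : 0 < ‖p.2‖ := by linarith [hp.one_le_norm]
  have hd := hp.two_le_depth
  have hdepth : ‖τ‖ * Real.sin θ * ‖p.2‖ / 2 ≤ depth τ p := by
    linarith [norm_mul_sin_le_im hθ.le hl hu, hp.im_le_two_mul_depth]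
  calc x ≤ K / depth τ p ^ n := hx
    _ ≤ K / depth τ p ^ k := by
        gcongr
        linarith
    _ ≤ K / (‖τ‖ * Real.sin θ * ‖p.2‖ / 2) ^ k := by gcongr
    _ = sectorConst τ K k θ / ‖p.2‖ ^ k := by
        rw [sectorConst, div_pow, div_pow, mul_pow _ ‖p.2‖]
        field_simp

end Sector

section Conjugacy

open Set Filter Topology

variable {τ : ℂ} {Δ₁ Δ₂ h g : ℂ × ℂ → ℂ} {u : ℂ × ℂ → ℂ × ℂ}
  {a b R₀ M δ A B w r : ℝ} {n : ℕ}

theorem deepDomain_subset_interior_sectDom' (ha : 0 < a) (hb : 0 < b) (hδ : 0 < δ) :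
    deepDomain τ (logLevel a - τ.im) (logLevel b) (-logLevel δ) ⊆
      interior (sectDom' τ a b δ) := by
  rw [← logLevel_norm_exp_mul τ ha, sectDom'_eq_sectDom]
  exact (isOpen_deepDomain _ _ _ _).subset_interior_iff.2
    (deepDomain_subset_sectDom (norm_exp_mul_pos τ ha) hb hδ)

theorem sectDom'_subset_closure_deepDomain (hτ : 0 < τ.im) (ha : 0 < a) (hab : a < b)
    (hδ : 0 < δ) : sectDom' τ a b δ ⊆
      closure (deepDomain τ (logLevel a - τ.im) (logLevel b) (-logLevel δ)) := by
  rw [← logLevel_norm_exp_mul τ ha, sectDom'_eq_sectDom]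
  exact sectDom_subset_closure_deepDomain (ne_zero_of_im_pos hτ) (norm_exp_mul_pos τ ha)
    ((mul_lt_of_lt_one_left ha (norm_exp_two_pi_I_mul_lt_one hτ)).trans hab) hδ

theorem sectDom'_subset_deepDomain (hτ : 0 < τ.im) {a' b' δ' : ℝ} (ha' : 0 < a') (ha : a' < a)
    (hab : a ≤ b) (hb : b < b') (hδ : 0 < δ) (hδδ' : δ < δ') :
    sectDom' τ a b δ ⊆ deepDomain τ (logLevel a' - τ.im) (logLevel b') (-logLevel δ') := by
  have hq := norm_exp_two_pi_I_mul_lt_one hτ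
  rw [← logLevel_norm_exp_mul τ ha', sectDom'_eq_sectDom]
  exact sectDom_subset_deepDomain (norm_exp_mul_pos τ ha')
    (mul_lt_mul_of_pos_left ha (norm_pos_iff.2 (exp_ne_zero _)))
    ((mul_le_of_le_one_left (ha'.trans ha).le hq.le).trans hab) hb hδ hδδ'

theorem isNonlinearSolution_of_pairSolProp (hτ : 0 < τ.im) (ha : 0 < a) (hb : 0 < b) (hδ : 0 < δ)
    (hsol : pairSolProp τ a b R₀ δ Δ₁ Δ₂ h g) :
    IsNonlinearSolution τ (logLevel a) (logLevel b) (-logLevel δ) (1 / 2)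
      (conjugacyNonlinearity Δ₁ Δ₂) fun p => (h p, g p) := by
  obtain ⟨-, hhd, -, hgd, hh, hh', hg, hg', hN, hsys⟩ := hsol
  have hsub := deepDomain_subset_interior_sectDom' (τ := τ) ha hb hδ
  have hdecay := ((rootDecayOn_nprime hh hh').prodMk (rootDecayOn_nprime hg hg')).mono_set
    (hsub.trans interior_subset)
  refine ⟨⟨(hhd.mono hsub).prodMk (hgd.mono hsub), ⟨_, hdecay⟩, fun p hp => ?_⟩, fun p hp => ?_⟩
  · obtain ⟨-, hg, hh⟩ := hsys p (deepDomain_subset_sectDom ha hb hδ hp)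
    rw [qFlow_neg_self (ne_zero_of_im_pos hτ)]
    exact Prod.ext hh hg
  · exact (hdecay.norm_le hp).trans ((max_le_add_of_nonneg (nprime_nonneg _ _)
      (nprime_nonneg _ _)).trans hN)

theorem pairSolProp_of_isNonlinearSolution (hτ : τ ≠ 0)
    (hu : IsNonlinearSolution τ A B w r (conjugacyNonlinearity Δ₁ Δ₂) u)
    (hS : sectDom τ a b δ ⊆ deepDomain τ A B w)
    (hS' : sectDom' τ a b δ ⊆ deepDomain τ (A - τ.im) B w)
    (hmem : ∀ p ∈ sectDom τ a b δ, perturb p (u p) ∈ omegaDom τ a b R₀)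
    (hdecay : RootDecayOn u (sectDom' τ a b δ) (1 / 8)) :
    pairSolProp τ a b R₀ δ Δ₁ Δ₂ (fun p => (u p).1) fun p => (u p).2 := by
  have hd : DifferentiableOn ℂ u (sectDom' τ a b δ) := hu.isTameSolution.differentiableOn.mono hS'
  have hfst : RootDecayOn (fun p => (u p).1) _ _ := hdecay.mono_norm fun p => norm_fst_le _
  have hsnd : RootDecayOn (fun p => (u p).2) _ _ := hdecay.mono_norm fun p => norm_snd_le _
  refine ⟨hd.fst.continuousOn, hd.fst.mono interior_subset, hd.snd.continuousOn,
    hd.snd.mono interior_subset, ⟨_, hfst.norm_mem_upperBounds⟩,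
    ⟨_, hfst.norm_mul_sqrt_mem_upperBounds⟩, ⟨_, hsnd.norm_mem_upperBounds⟩,
    ⟨_, hsnd.norm_mul_sqrt_mem_upperBounds⟩, ?_, fun p hp => ⟨hmem p hp, ?_⟩⟩
  · linarith [hfst.nprime_le (by norm_num), hsnd.nprime_le (by norm_num)]
  · have heq := hu.isTameSolution.qFlow_sub_eq p (hS hp)
    rw [qFlow_neg_self hτ] at heq
    exact ⟨congrArg Prod.snd heq, congrArg Prod.fst heq⟩

theorem eventually_eqOn_of_pairSolProp (hτ : 0 < τ.im) (hn : n ≠ 0) (hM : 0 < M) (ha : 0 < a)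
    (hab : a < b) (h₁ : IsDecayingOn n Δ₁ (interior (omegaDom τ a b R₀)) M)
    (h₂ : IsDecayingOn n Δ₂ (interior (omegaDom τ a b R₀)) M) :
    ∀ᶠ δ in 𝓝[>] 0, ∀ {h g h' g'}, pairSolProp τ a b R₀ δ Δ₁ Δ₂ h g →
      pairSolProp τ a b R₀ δ Δ₁ Δ₂ h' g' →
        EqOn h h' (sectDom' τ a b δ) ∧ EqOn g g' (sectDom' τ a b δ) := by
  have hq := norm_exp_two_pi_I_mul_lt_one hτ
  set q := ‖exp (2 * Real.pi * I * τ)‖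
  have hη : 0 < (1 - q) / 4 := by linarith
  have hq₀ : 0 ≤ q := norm_nonneg _
  obtain ⟨C, Λ, -, -, hregime⟩ := exists_eventually_isContractionRegime (r := 1 / 2)
    hτ hn hM h₁ h₂ (by norm_num) hη (by linarith) ha hab (by nlinarith) (by nlinarith)
  have hlim := tendsto_neg_logLevel_mul one_pos
  simp only [one_mul] at hlim
  filter_upwards [hlim.eventually hregime, self_mem_nhdsWithin] with δ hG hδ h g h' g' hsol hsol'
  have hb := ha.trans hab
  have heq := hG.eqOn (isNonlinearSolution_of_pairSolProp hτ ha hb hδ hsol)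
    (isNonlinearSolution_of_pairSolProp hτ ha hb hδ hsol')
  have hsub := (deepDomain_subset_interior_sectDom' (τ := τ) ha hb hδ).trans interior_subset
  have hclosure := sectDom'_subset_closure_deepDomain hτ ha hab hδ
  obtain ⟨hhc, -, hgc, -⟩ := hsol
  obtain ⟨hhc', -, hgc', -⟩ := hsol'
  exact ⟨EqOn.of_subset_closure (fun p hp => congrArg Prod.fst (heq hp)) hhc hhc' hsub hclosure,
    EqOn.of_subset_closure (fun p hp => congrArg Prod.snd (heq hp)) hgc hgc' hsub hclosure⟩

theorem exists_eventually_pairSolProp (hτ : 0 < τ.im) (hn : n ≠ 0) (hM : 0 < M) (ha : 0 < a)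
    (hab : a < b) (h₁ : IsDecayingOn n Δ₁ (interior (omegaDom τ a b R₀)) M)
    (h₂ : IsDecayingOn n Δ₂ (interior (omegaDom τ a b R₀)) M) :
    ∃ K, 0 < K ∧ ∀ᶠ δ in 𝓝[>] 0, ∃ u : ℂ × ℂ → ℂ × ℂ,
      pairSolProp τ a b R₀ δ Δ₁ Δ₂ (fun p => (u p).1) (fun p => (u p).2) ∧
      RootDecayOn u (sectDom' τ a b δ) (K / (-logLevel (2 * δ)) ^ n) ∧
      ∀ p ∈ sectDom' τ a b δ, IsDeep τ p ∧ ‖u p‖ ≤ K / depth τ p ^ (n + 1) := by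
  have hq := norm_exp_two_pi_I_mul_lt_one hτ
  have hb := ha.trans hab
  have ha' : 0 < 3 / 4 * a := by positivity
  have hb' : 0 < 5 / 4 * b := by positivity
  have hqa : ‖exp (2 * Real.pi * I * τ)‖ * a / 2 < 3 / 4 * a * (1 - (1 / 8 + 1 / 8)) := by
    nlinarith
  have hbb : 5 / 4 * b * (1 + (1 / 8 + 1 / 8)) < 2 * b := by linarith
  obtain ⟨C, Λ, hC, hΛ, hregime⟩ := exists_eventually_isContractionRegime (r := 1 / 8) (η := 1 / 8)
    hτ hn hM h₁ h₂ (by norm_num) (by norm_num) (by norm_num) ha' (by linarith) hqa hbb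
  have hmem := eventually_perturb_mem_interior_omegaDom (R₀ := R₀) hτ ha' hb' (by norm_num) hqa hbb
  have hlim := tendsto_neg_logLevel_mul two_pos
  refine ⟨C * Λ, by positivity, ?_⟩
  filter_upwards [hlim.eventually hregime, hlim.eventually hmem,
    hlim.eventually (eventually_div_pow_le hn (C * Λ) (by norm_num : (0 : ℝ) < 1 / 8)),
    self_mem_nhdsWithin] with δ hG hmem hr (hδ : 0 < δ)
  have hS' := sectDom'_subset_deepDomain (τ := τ) hτ ha' (by linarith : 3 / 4 * a < a) hab.le
    (by linarith : b < 5 / 4 * b) hδ (by linarith : δ < 2 * δ)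
  have hS := sectDom_subset_deepDomain (τ := τ) ha' (by linarith : 3 / 4 * a < a) hab.le
    (by linarith : b < 5 / 4 * b) hδ (by linarith : δ < 2 * δ)
  have hu := hG.isNonlinearSolution_picardLimit hr
  have hbound := hG.hasWeightedBound_picardLimit hr
  have hdecay := (hbound.rootDecayOn hG.one_le_depth (by positivity)).mono_set hS'
  refine ⟨_, pairSolProp_of_isNonlinearSolution (ne_zero_of_im_pos hτ) hu hS hS' (fun p hp => ?_)
    fun p hp => (hdecay p hp).trans hr, hdecay, fun p hp => ?_⟩
  · refine interior_subset (hmem p (hS hp) _ ((hu.norm_le p ?_).trans (by norm_num)))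
    exact hG.deepDomain_subset_enlarged (hS hp)
  · have hdeep := isDeep_of_mem_deepDomain hG.depthThreshold_le hτ (hS' hp)
    exact ⟨hdeep, hbound.norm_le (hS' hp) (by linarith [hdeep.two_le_depth])⟩

theorem eventually_nprime_add_nprime_lt (hτ : 0 < τ.im) (hn : n ≠ 0) (hM : 0 < M) (ha : 0 < a)
    (hab : a < b) (h₁ : IsDecayingOn n Δ₁ (interior (omegaDom τ a b R₀)) M)
    (h₂ : IsDecayingOn n Δ₂ (interior (omegaDom τ a b R₀)) M) {ε : ℝ} (hε : 0 < ε) :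
    ∀ᶠ δ in 𝓝[>] 0, ∀ {h g}, pairSolProp τ a b R₀ δ Δ₁ Δ₂ h g →
      nprime (sectDom' τ a b δ) h + nprime (sectDom' τ a b δ) g < ε := by
  obtain ⟨K, hK, hexists⟩ := exists_eventually_pairSolProp hτ hn hM ha hab h₁ h₂
  have hlim := tendsto_neg_logLevel_mul two_pos
  filter_upwards [hexists, eventually_eqOn_of_pairSolProp hτ hn hM ha hab h₁ h₂,
    hlim.eventually (eventually_gt_atTop 0),
    hlim.eventually (eventually_div_pow_le hn K (by positivity : 0 < ε / 8))]
    with δ ⟨u, hsol, hdecay, _⟩ huniq hw hsmall h g hsol'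
  obtain ⟨hh, hg⟩ := huniq hsol' hsol
  have hfst : RootDecayOn (fun p => (u p).1) _ _ := hdecay.mono_norm fun p => norm_fst_le _
  have hsnd : RootDecayOn (fun p => (u p).2) _ _ := hdecay.mono_norm fun p => norm_snd_le _
  rw [nprime_congr hh, nprime_congr hg]
  linarith [hfst.nprime_le (by positivity), hsnd.nprime_le (by positivity)]

end Conjugacy

theorem statement15_general (τ : ℂ) (hτ : 0 < τ.im) (N k : ℕ) (hN : 4 ≤ N) (hk : k + 2 ≤ N)
    (a b : ℝ) (ha : 0 < a) (hab : a < b) (R₀ M : ℝ) (hM : 0 < M) (Δ₁ Δ₂ : ℂ × ℂ → ℂ)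
    (hΔ₁d : DifferentiableOn ℂ Δ₁ (interior (omegaDom τ a b R₀)))
    (hΔ₂d : DifferentiableOn ℂ Δ₂ (interior (omegaDom τ a b R₀)))
    (hΔ₁b : ∀ p ∈ omegaDom τ a b R₀, ‖Δ₁ p‖ ≤ M / ‖p.2‖ ^ N)
    (hΔ₂b : ∀ p ∈ omegaDom τ a b R₀, ‖Δ₂ p‖ ≤ M / ‖p.2‖ ^ N) :
    ∃ δ₀ : ℝ, 0 < δ₀ ∧ ∃ Dfun : ℝ → ℝ,
      (∀ θ : ℝ, 0 < θ → θ ≤ Real.pi / 2 → 0 < Dfun θ) ∧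
      (∀ δ : ℝ, 0 < δ → δ ≤ δ₀ →
        ∃ h g : ℂ × ℂ → ℂ,
          pairSolProp τ a b R₀ δ Δ₁ Δ₂ h g ∧
          (∀ h' g' : ℂ × ℂ → ℂ, pairSolProp τ a b R₀ δ Δ₁ Δ₂ h' g' →
            ∀ p ∈ sectDom' τ a b δ, h' p = h p ∧ g' p = g p) ∧
          (∀ θ : ℝ, 0 < θ → θ ≤ Real.pi / 2 →
            ∀ p ∈ sectDom' τ a b δ,
              θ - arg τ ≤ arg p.2 → arg p.2 ≤ Real.pi - θ - arg τ →
              ‖h p‖ ≤ Dfun θ / ‖p.2‖ ^ k ∧ ‖g p‖ ≤ Dfun θ / ‖p.2‖ ^ k)) ∧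
      (∀ ε : ℝ, 0 < ε → ∃ δ₁ : ℝ, 0 < δ₁ ∧
        ∀ δ : ℝ, 0 < δ → δ ≤ δ₀ → δ ≤ δ₁ →
          ∀ h g : ℂ × ℂ → ℂ, pairSolProp τ a b R₀ δ Δ₁ Δ₂ h g →
            nprime (sectDom' τ a b δ) h + nprime (sectDom' τ a b δ) g < ε) := by
  have hτ₀ := ne_zero_of_im_pos hτ
  obtain ⟨n, rfl⟩ := Nat.exists_eq_add_of_le' (show 3 ≤ N by omega)
  have hn : n ≠ 0 := by omega
  have h₁ : IsDecayingOn n Δ₁ (interior (omegaDom τ a b R₀)) M :=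
    ⟨hΔ₁d, fun p hp => hΔ₁b p (interior_subset hp)⟩
  have h₂ : IsDecayingOn n Δ₂ (interior (omegaDom τ a b R₀)) M :=
    ⟨hΔ₂d, fun p hp => hΔ₂b p (interior_subset hp)⟩
  obtain ⟨K, hK, hexists⟩ := exists_eventually_pairSolProp hτ hn hM ha hab h₁ h₂
  obtain ⟨δ₀, hδ₀, hsmall⟩ := mem_nhdsGT_iff_exists_Ioc_subset.1
    (hexists.and (eventually_eqOn_of_pairSolProp hτ hn hM ha hab h₁ h₂))
  refine ⟨δ₀, hδ₀, sectorConst τ K k, fun θ hθ hθπ => sectorConst_pos hτ₀ hK hθ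
    (by linarith [Real.pi_pos]) k, fun δ hδ hδδ₀ => ?_, fun ε hε => ?_⟩
  · obtain ⟨⟨u, hsol, -, hdecay⟩, huniq⟩ := hsmall ⟨hδ, hδδ₀⟩
    refine ⟨_, _, hsol, fun h' g' hsol' p hp => (huniq hsol' hsol).imp (· hp) (· hp),
      fun θ hθ _ p hp hl hr => ?_⟩
    obtain ⟨hdeep, hbound⟩ := hdecay p hp
    have hsector := hdeep.le_sectorConst_div_norm_pow hτ₀ hK.le (by omega : k ≤ n + 1) hbound hθ
      hl hr
    exact ⟨(norm_fst_le _).trans hsector, (norm_snd_le _).trans hsector⟩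
  · obtain ⟨δ₁, hδ₁, hlt⟩ := mem_nhdsGT_iff_exists_Ioc_subset.1
      (eventually_nprime_add_nprime_lt hτ hn hM ha hab h₁ h₂ hε)
    exact ⟨δ₁, hδ₁, fun δ hδ _ hδδ₁ h g => hlt ⟨hδ, hδδ₁⟩⟩

/-- solution of the nonlinear conjugacy (functional) equations by the fixed
point method: existence and uniqueness of a pair `(h, g̃)` with `N'(h) + N'(g̃) ≤ 1/2`
solving the system, smallness as `δ → 0`, and sectorial decay `D_θ/|ξ|^{m−2}`. -/
theorem statement15 (τ : ℂ) (hτ : 0 < τ.im) (N m : ℕ) (hN : 4 ≤ N) (hm : 3 ≤ m)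
    (hmN : m < N) (a b : ℝ) (ha : 0 < a) (hab : a < b)
    (haqb : a < ‖Complex.exp (2 * (Real.pi : ℂ) * Complex.I * τ)‖ * b)
    (R₀ M : ℝ) (hR₀ : 0 < R₀) (hM : 0 < M)
    (Δ₁ Δ₂ : ℂ × ℂ → ℂ)
    (hΔ₁c : ContinuousOn Δ₁ (omegaDom τ a b R₀))
    (hΔ₁d : DifferentiableOn ℂ Δ₁ (interior (omegaDom τ a b R₀)))
    (hΔ₂c : ContinuousOn Δ₂ (omegaDom τ a b R₀))
    (hΔ₂d : DifferentiableOn ℂ Δ₂ (interior (omegaDom τ a b R₀)))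
    (hΔ₁b : ∀ p ∈ omegaDom τ a b R₀, ‖Δ₁ p‖ ≤ M / ‖p.2‖ ^ N)
    (hΔ₂b : ∀ p ∈ omegaDom τ a b R₀, ‖Δ₂ p‖ ≤ M / ‖p.2‖ ^ N) :
    ∃ δ₀ : ℝ, 0 < δ₀ ∧ ∃ Dfun : ℝ → ℝ,
      (∀ θ : ℝ, 0 < θ → θ ≤ Real.pi / 2 → 0 < Dfun θ) ∧
      (∀ δ : ℝ, 0 < δ → δ ≤ δ₀ →
        ∃ h g : ℂ × ℂ → ℂ,
          pairSolProp τ a b R₀ δ Δ₁ Δ₂ h g ∧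
          (∀ h' g' : ℂ × ℂ → ℂ, pairSolProp τ a b R₀ δ Δ₁ Δ₂ h' g' →
            ∀ p ∈ sectDom' τ a b δ, h' p = h p ∧ g' p = g p) ∧
          (∀ θ : ℝ, 0 < θ → θ ≤ Real.pi / 2 →
            ∀ p ∈ sectDom' τ a b δ,
              θ - Complex.arg τ ≤ Complex.arg p.2 →
              Complex.arg p.2 ≤ Real.pi - θ - Complex.arg τ →
              ‖h p‖ ≤ Dfun θ / ‖p.2‖ ^ (m - 2) ∧
              ‖g p‖ ≤ Dfun θ / ‖p.2‖ ^ (m - 2))) ∧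
      (∀ ε : ℝ, 0 < ε → ∃ δ₁ : ℝ, 0 < δ₁ ∧
        ∀ δ : ℝ, 0 < δ → δ ≤ δ₀ → δ ≤ δ₁ →
          ∀ h g : ℂ × ℂ → ℂ, pairSolProp τ a b R₀ δ Δ₁ Δ₂ h g →
            nprime (sectDom' τ a b δ) h + nprime (sectDom' τ a b δ) g < ε) :=
  statement15_general τ hτ N (m - 2) hN (by omega) a b ha hab R₀ M hM Δ₁ Δ₂ hΔ₁d hΔ₂d hΔ₁b hΔ₂b
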